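/- arXiv:1507.02155 — 6 statements merged into one kernel-verified Lean document; each statement's English description precedes it below -/
import Mathlib

section
/- For every b > 0 there exist a real number e < 0 and a nonzero smooth 2π-periodic function g : ℝ → ℝ such that −g''(t) − b·cos(t)·g(t) = e·g(t) for all t ∈ ℝ. In particular, the rescaled Mathieu operator M_b with periodic boundary conditions has a negative eigenvalue, and there exists a nonzero smooth 2π-periodic g : ℝ → ℝ with ∫₀^{2π} (g'(t)² − b·cos(t)·g(t)²) dt < 0. -/
open MeasureTheory Real Filter Topology

noncomputable section

/-!
The eigenfunction is found by shooting. Let `y(τ, ·)` solve `y'' = -b (cos t - sin τ) y`,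
`y(0) = 1`, `y'(0) = 0`, so that the energy is `e = -b sin τ`, and put `z = ∂y/∂t`. If `z(τ, π) = 0`,
then by uniqueness `y(τ, ·)` is symmetric about both `0` and `π`, hence `2π`-periodic. It therefore
suffices to find `τ ∈ (0, π/2]` with `z(τ, π) = 0`, and by the intermediate value theorem this
follows from two sign facts.

* At `τ = π/2` (`e = -b`) the potential is repulsive, so `y > 0` and `z ≥ 0` on `[0, π]`
  (`repulsive`).
* There is `τ₁ ∈ [0, π/2)` with `z(τ₁, π) < 0` (`exists_neg_slope`). If `y(0, ·)` has no zero in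
  `[0, π]`, then `u = z / y` satisfies `(u + b sin t)' = -u²`, so `τ₁ = 0` works
  (`neg_slope_of_pos`). Otherwise, let `τ₁` be the largest parameter for which `y(τ₁, ·)` has a
  zero in `[0, π]`; then `y(τ₁, ·) ≥ 0` there, its zeros are simple, so the zero sits at `π` and
  the slope there is negative.

The solutions are built globally, jointly continuous in `(τ, t)`, by summing the Picard iterates
(`exists_flow`). The second claim holds for the same `g`, because
`g'² - b cos(t) g² = (g g')' + e g²`.
-/

namespace Mathieu

/-! ### The linear equation: existence, uniqueness, smoothness -/

/-- The companion linear map `(y, z) ↦ (z, -c y)` of the equation `y'' = -c y`. -/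
def companion (c : ℝ) : ℝ × ℝ →L[ℝ] ℝ × ℝ :=
  (ContinuousLinearMap.snd ℝ ℝ ℝ).prod (-(c • ContinuousLinearMap.fst ℝ ℝ ℝ))

lemma companion_apply (c : ℝ) (x : ℝ × ℝ) : companion c x = (x.2, -(c * x.1)) := by
  simp [companion]

lemma norm_companion_le {c K : ℝ} (hK : 1 ≤ K) (hc : |c| ≤ K) (x : ℝ × ℝ) :
    ‖companion c x‖ ≤ K * ‖x‖ := by
  have h1 : |x.1| ≤ ‖x‖ := norm_fst_le x
  have h2 : |x.2| ≤ ‖x‖ := norm_snd_le x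
  have h0 := norm_nonneg x
  rw [companion_apply, Prod.norm_def]
  refine max_le ?_ ?_
  · rw [Real.norm_eq_abs]; nlinarith
  · rw [norm_neg, Real.norm_eq_abs, abs_mul]
    exact mul_le_mul hc h1 (abs_nonneg _) (by linarith)

/-- Picard iterates (increments) of the system `X' = companion (q (τ, t)) X`, `X(τ, 0) = (1, 0)`;
the solution is their sum. -/
def iter (q : ℝ × ℝ → ℝ) : ℕ → ℝ × ℝ → ℝ × ℝ
  | 0, _ => (1, 0)
  | n + 1, p => ∫ s in (0 : ℝ)..p.2, companion (q (p.1, s)) (iter q n (p.1, s))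

variable {q : ℝ × ℝ → ℝ}

lemma continuous_iter (hq : Continuous q) (n : ℕ) : Continuous (iter q n) := by
  induction n with
  | zero => exact continuous_const
  | succ n ih =>
    have h : Continuous (Function.uncurry fun (p : ℝ × ℝ) (s : ℝ) =>
        companion (q (p.1, s)) (iter q n (p.1, s))) := by
      simp only [companion_apply, Function.uncurry_def]
      fun_prop
    exact intervalIntegral.continuous_parametric_intervalIntegral_of_continuous h continuous_snd

lemma continuous_integrand (hq : Continuous q) (n : ℕ) (τ : ℝ) :
    Continuous fun s => companion (q (τ, s)) (iter q n (τ, s)) := by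
  have := continuous_iter hq n
  simp only [companion_apply]
  fun_prop

lemma hasDerivAt_iter (hq : Continuous q) (n : ℕ) (τ t : ℝ) :
    HasDerivAt (fun t => iter q (n + 1) (τ, t)) (companion (q (τ, t)) (iter q n (τ, t))) t :=
  (continuous_integrand hq n τ).integral_hasStrictDerivAt 0 t |>.hasDerivAt

lemma norm_iter_le {K : ℝ} (hK : 1 ≤ K) (hb : ∀ p, |q p| ≤ K) (n : ℕ)
    (τ t : ℝ) : ‖iter q n (τ, t)‖ ≤ (K * |t|) ^ n / n.factorial := by
  have hK0 : 0 ≤ K := by linarith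
  induction n generalizing t with
  | zero => simp [iter, Prod.norm_def]
  | succ n ih =>
    have key : ∀ s, ‖companion (q (τ, s)) (iter q n (τ, s))‖
        ≤ K * ((K * |s|) ^ n / n.factorial) := fun s =>
      (norm_companion_le hK (hb _) _).trans (mul_le_mul_of_nonneg_left (ih s) hK0)
    have hcont : Continuous fun s : ℝ => K * ((K * |s|) ^ n / n.factorial) := by fun_prop
    have hn : ((n : ℝ) + 1) ≠ 0 := by positivity
    have hf : (n.factorial : ℝ) ≠ 0 := by positivity
    have hint : |∫ s in (0 : ℝ)..t, K * ((K * |s|) ^ n / n.factorial)|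
        = (K * |t|) ^ (n + 1) / (n + 1).factorial := by
      have e1 : ∀ s : ℝ, K * ((K * |s|) ^ n / n.factorial)
          = K ^ (n + 1) / n.factorial * |s| ^ n := by
        intro s; rw [mul_pow]; ring
      simp_rw [e1]
      rw [intervalIntegral.integral_const_mul, abs_mul]
      have e2 : |∫ s in (0 : ℝ)..t, |s| ^ n| = |t| ^ (n + 1) / (n + 1) := by
        have h := integral_pow_abs_sub_uIoc (a := 0) (b := t) n
        simp only [sub_zero] at h
        rw [← h, intervalIntegral.abs_intervalIntegral_eq]
        exact abs_of_nonneg (integral_nonneg fun s => by positivity)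
      rw [e2, abs_of_nonneg (by positivity), Nat.factorial_succ]
      push_cast
      rw [mul_pow]
      field_simp
    calc ‖iter q (n + 1) (τ, t)‖
        ≤ |∫ s in (0 : ℝ)..t, K * ((K * |s|) ^ n / n.factorial)| :=
          intervalIntegral.norm_integral_le_abs_of_norm_le (ae_of_all _ key)
            (hcont.intervalIntegrable _ _)
      _ = _ := hint

lemma norm_iter_le_of_abs_le {K R : ℝ} (hK : 1 ≤ K) (hb : ∀ p, |q p| ≤ K)
    (n : ℕ) (τ : ℝ) {t : ℝ} (ht : |t| ≤ R) :
    ‖iter q n (τ, t)‖ ≤ (K * R) ^ n / n.factorial := by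
  refine (norm_iter_le hK hb n τ t).trans ?_
  have : 0 ≤ K := by linarith
  gcongr

/-- Global solutions of `y'' = -q(τ, t) y` with `y = 1`, `y' = 0` at `t = 0`, depending continuously
on the time and the parameter. -/
lemma exists_flow {K : ℝ} (hK : 1 ≤ K) (hq : Continuous q) (hb : ∀ p, |q p| ≤ K) :
    ∃ y z : ℝ × ℝ → ℝ, Continuous y ∧ Continuous z ∧ (∀ τ, y (τ, 0) = 1) ∧ (∀ τ, z (τ, 0) = 0) ∧
      (∀ τ t, HasDerivAt (fun t => y (τ, t)) (z (τ, t)) t) ∧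
      ∀ τ t, HasDerivAt (fun t => z (τ, t)) (-(q (τ, t) * y (τ, t))) t := by
  have hK0 : 0 ≤ K := by linarith
  have hsum : ∀ p : ℝ × ℝ, Summable fun n => iter q n p := fun p =>
    Summable.of_norm_bounded (Real.summable_pow_div_factorial (K * |p.2|))
      fun n => norm_iter_le hK hb n p.1 p.2
  set X : ℝ × ℝ → ℝ × ℝ := fun p => ∑' n, iter q n p with hX
  have hXc : Continuous X := by
    rw [continuous_iff_continuousAt]
    intro p
    set R := |p.2| + 1
    have hopen : IsOpen {x : ℝ × ℝ | |x.2| < R} :=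
      isOpen_lt (by fun_prop) continuous_const
    have hon : ContinuousOn X {x : ℝ × ℝ | |x.2| < R} :=
      continuousOn_tsum (fun n => (continuous_iter hq n).continuousOn)
        (Real.summable_pow_div_factorial (K * R))
        fun n x hx => norm_iter_le_of_abs_le hK hb n x.1 (le_of_lt hx)
    exact hon.continuousAt (hopen.mem_nhds (by simp [R]))
  have hX0 : ∀ τ, X (τ, 0) = (1, 0) := by
    intro τ
    have : ∀ n ≠ 0, iter q n (τ, 0) = 0 := by
      intro n hn
      obtain ⟨m, rfl⟩ := Nat.exists_eq_succ_of_ne_zero hn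
      simp [iter]
    rw [hX]
    simp only
    rw [tsum_eq_single 0 this]
    rfl
  have hXd : ∀ τ t, HasDerivAt (fun t => X (τ, t)) (companion (q (τ, t)) (X (τ, t))) t := by
    intro τ t
    set R := |t| + 1
    have hR : 0 ≤ R := by positivity
    have ht : t ∈ Metric.ball (0 : ℝ) R := by simp [R]
    have hd := hasDerivAt_tsum_of_isPreconnected
      (g := fun n t => iter q (n + 1) (τ, t))
      (g' := fun n t => companion (q (τ, t)) (iter q n (τ, t)))
      (u := fun n : ℕ => K * ((K * R) ^ n / n.factorial))
      ((Real.summable_pow_div_factorial (K * R)).mul_left K) Metric.isOpen_ball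
      (convex_ball (0 : ℝ) R).isPreconnected
      (fun n s _ => hasDerivAt_iter hq n τ s)
      (fun n s hs => (norm_companion_le hK (hb _) _).trans (mul_le_mul_of_nonneg_left
        (norm_iter_le_of_abs_le hK hb n τ (by simpa using (Metric.mem_ball.1 hs).le)) hK0))
      ht ((summable_nat_add_iff 1).2 (hsum (τ, t))) ht
    rw [← ContinuousLinearMap.map_tsum _ (hsum (τ, t))] at hd
    have hsplit : (fun t => X (τ, t)) = fun t => (1, 0) + ∑' n, iter q (n + 1) (τ, t) := by
      funext s
      rw [hX]
      simp only
      rw [(hsum (τ, s)).tsum_eq_zero_add]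
      rfl
    rw [hsplit]
    exact hd.const_add _
  refine ⟨fun p => (X p).1, fun p => (X p).2, by fun_prop, by fun_prop, fun τ => by simp [hX0],
    fun τ => by simp [hX0], fun τ t => ?_, fun τ t => ?_⟩
  · have h := (hXd τ t).fst
    rwa [companion_apply] at h
  · have h := (hXd τ t).snd
    rwa [companion_apply] at h

/-- `y` solves `y'' = -c(t) y`, with `z = y'`. -/
structure Sol (c y z : ℝ → ℝ) : Prop where
  d1 : ∀ t, HasDerivAt y (z t) t
  d2 : ∀ t, HasDerivAt z (-(c t * y t)) t

lemma Sol.unique {c y z y' z' : ℝ → ℝ} {K : ℝ} (hK : 1 ≤ K) (hc : ∀ t, |c t| ≤ K)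
    (h : Sol c y z) (h' : Sol c y' z') {t₀ : ℝ} (hy : y t₀ = y' t₀) (hz : z t₀ = z' t₀) :
    y = y' := by
  have hv : ∀ t, LipschitzOnWith K.toNNReal (fun x => companion (c t) x) Set.univ := by
    intro t
    refine (AddMonoidHomClass.lipschitz_of_bound (companion (c t)) K
      fun x => norm_companion_le hK (hc t) x).lipschitzOnWith
  have := ODE_solution_unique_univ (v := fun t x => companion (c t) x) (s := fun _ => Set.univ)
    (f := fun t => (y t, z t)) (g := fun t => (y' t, z' t)) (t₀ := t₀) hv
    (fun t => ⟨by rw [companion_apply]; exact (h.d1 t).prodMk (h.d2 t), trivial⟩)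
    (fun t => ⟨by rw [companion_apply]; exact (h'.d1 t).prodMk (h'.d2 t), trivial⟩)
    (by simp [hy, hz])
  funext t
  exact congrArg Prod.fst (congrFun this t)

lemma Sol.deriv_ne_zero {c y z : ℝ → ℝ} {K : ℝ} (hK : 1 ≤ K) (hc : ∀ t, |c t| ≤ K)
    (h : Sol c y z) (h0 : y 0 = 1) {t₀ : ℝ} (hy : y t₀ = 0) : z t₀ ≠ 0 := by
  intro hz
  have h' : Sol c (fun _ => 0) (fun _ => 0) :=
    ⟨fun t => hasDerivAt_const t 0, fun t => by simpa using hasDerivAt_const t (0 : ℝ)⟩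
  have := congrFun (h.unique hK hc h' hy hz) 0
  simp [h0] at this

/-- A coefficient symmetric about `a` and a critical point at `a` force symmetry of the
solution about `a`. -/
lemma Sol.symm_about {c y z : ℝ → ℝ} {K : ℝ} (hK : 1 ≤ K) (hc : ∀ t, |c t| ≤ K)
    (h : Sol c y z) (a : ℝ) (hsymm : ∀ t, c (2 * a - t) = c t) (hz : z a = 0) (t : ℝ) :
    y (2 * a - t) = y t := by
  have hr : Sol c (fun t => y (2 * a - t)) (fun t => -z (2 * a - t)) := by
    refine ⟨fun t => ?_, fun t => ?_⟩
    · exact (h.d1 (2 * a - t)).comp_const_sub (2 * a) t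
    · have := ((h.d2 (2 * a - t)).comp_const_sub (2 * a) t).neg
      rw [hsymm, neg_neg] at this
      exact this
  have ha : 2 * a - a = a := by ring
  exact congrFun (hr.unique hK hc h (t₀ := a) (by simp [ha]) (by simp [ha, hz])) t

lemma Sol.contDiff {c y z : ℝ → ℝ} (h : Sol c y z) (hc : ContDiff ℝ (⊤ : ℕ∞) c) :
    ContDiff ℝ (⊤ : ℕ∞) y := by
  have hy : deriv y = z := funext fun t => (h.d1 t).deriv
  have hz : deriv z = fun t => -(c t * y t) := funext fun t => (h.d2 t).deriv
  have dy : Differentiable ℝ y := fun t => (h.d1 t).differentiableAt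
  have dz : Differentiable ℝ z := fun t => (h.d2 t).differentiableAt
  have key : ∀ n : ℕ, ContDiff ℝ n y ∧ ContDiff ℝ n z := by
    intro n
    induction n with
    | zero => exact ⟨contDiff_zero.2 dy.continuous, contDiff_zero.2 dz.continuous⟩
    | succ n ih =>
      have hcn : ContDiff ℝ n c := hc.of_le (by exact_mod_cast le_top)
      push_cast
      rw [contDiff_succ_iff_deriv, contDiff_succ_iff_deriv, hy, hz]
      exact ⟨⟨dy, by simp, ih.2⟩, dz, by simp, (hcn.mul ih.1).neg⟩
  exact contDiff_infty.2 fun n => (key n).1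

/-! ### Sign of the slope at `π` -/

lemma Sol.continuous {c y z : ℝ → ℝ} (h : Sol c y z) : Continuous y :=
  continuous_iff_continuousAt.2 fun t => (h.d1 t).continuousAt

lemma pos_of_ne_zero {y : ℝ → ℝ} (hy : Continuous y) (h0 : y 0 = 1) {T : ℝ}
    (hne : ∀ t ∈ Set.Icc 0 T, y t ≠ 0) : ∀ t ∈ Set.Icc 0 T, 0 < y t := by
  intro t ht
  by_contra hneg
  obtain ⟨s, hs, hs0⟩ := intermediate_value_Icc' ht.1 hy.continuousOn
    (show (0 : ℝ) ∈ Set.Icc (y t) (y 0) from ⟨not_lt.1 hneg, by simp [h0]⟩)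
  exact hne s ⟨hs.1, hs.2.trans ht.2⟩ hs0

/-- If `c ≤ 0`, then `(y y')' = y'² - c y² ≥ 0` makes `y y'` and hence `y²` nondecreasing. -/
lemma repulsive {c y z : ℝ → ℝ} (h : Sol c y z) (h0 : y 0 = 1) (hz0 : z 0 = 0)
    (hc : ∀ t, c t ≤ 0) {t : ℝ} (ht : 0 ≤ t) : 0 < y t ∧ 0 ≤ z t := by
  have hd1 : ∀ t, HasDerivAt (fun t => y t * z t) (z t * z t + y t * -(c t * y t)) t :=
    fun t => (h.d1 t).mul (h.d2 t)
  have hm1 : Monotone fun t => y t * z t :=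
    monotone_of_hasDerivAt_nonneg hd1 fun t => by
      have := hc t
      have : 0 ≤ z t * z t + y t * -(c t * y t) := by
        nlinarith [mul_self_nonneg (z t), mul_nonneg (neg_nonneg.2 this) (mul_self_nonneg (y t))]
      simpa using this
  have hyz : ∀ t, 0 ≤ t → 0 ≤ y t * z t := fun t ht => by
    have := hm1 ht
    simpa [h0, hz0] using this
  have hd2 : ∀ t, HasDerivAt (fun t => y t * y t) (z t * y t + y t * z t) t :=
    fun t => (h.d1 t).mul (h.d1 t)
  have hm2 : MonotoneOn (fun t => y t * y t) (Set.Ici 0) := by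
    refine monotoneOn_of_hasDerivWithinAt_nonneg (convex_Ici 0)
      (h.continuous.mul h.continuous).continuousOn (fun t _ => (hd2 t).hasDerivWithinAt)
      fun t ht => ?_
    have := hyz t (interior_subset ht)
    linarith
  have hne : ∀ s, 0 ≤ s → y s ≠ 0 := fun s hs hy => by
    have := hm2 (Set.mem_Ici.2 le_rfl) (Set.mem_Ici.2 hs) hs
    simp only [h0, hy] at this
    norm_num at this
  have hpos : 0 < y t :=
    pos_of_ne_zero h.continuous h0 (fun s hs => hne s hs.1) t ⟨ht, le_rfl⟩
  exact ⟨hpos, nonneg_of_mul_nonneg_right (hyz t ht) hpos⟩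

/-- At zero energy, a solution positive on `[0, π]` ends with negative slope, by the Riccati
equation for `u = z / y`: the function `u + b sin t` has derivative `-u²`, vanishes at `0`, and is
not constant. -/
lemma neg_slope_of_pos {b : ℝ} (hb : 0 < b) {y z : ℝ → ℝ} (h : Sol (fun t => b * cos t) y z)
    (hz0 : z 0 = 0) (hpos : ∀ t ∈ Set.Icc 0 π, 0 < y t) : z π < 0 := by
  set w : ℝ → ℝ := fun t => z t / y t + b * sin t with hw
  have hd : ∀ t ∈ Set.Icc 0 π, HasDerivAt w (-(z t / y t) ^ 2) t := by
    intro t ht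
    have hy := (hpos t ht).ne'
    have := ((h.d2 t).div (h.d1 t) hy).add ((hasDerivAt_sin t).const_mul b)
    refine this.congr_deriv ?_
    field_simp
    ring
  have hanti : AntitoneOn w (Set.Icc 0 π) := by
    refine antitoneOn_of_hasDerivWithinAt_nonpos (convex_Icc 0 π)
      (fun t ht => (hd t ht).continuousAt.continuousWithinAt)
      (fun t ht => (hd t (interior_subset ht)).hasDerivWithinAt) fun t _ => ?_
    have := sq_nonneg (z t / y t)
    linarith
  have hw0 : w 0 = 0 := by simp [hw, hz0]
  have hwπ : w π = z π / y π := by simp [hw]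
  have hmem0 : (0 : ℝ) ∈ Set.Icc 0 π := ⟨le_rfl, pi_pos.le⟩
  have hmemπ : π ∈ Set.Icc 0 π := ⟨pi_pos.le, le_rfl⟩
  by_contra hneg
  have hge : 0 ≤ w π := by
    rw [hwπ]; exact div_nonneg (not_lt.1 hneg) (hpos π hmemπ).le
  have hzero : ∀ t ∈ Set.Icc 0 π, w t = 0 := fun t ht =>
    le_antisymm (hw0 ▸ hanti hmem0 ht ht.1) (hge.trans (hanti ht hmemπ ht.2))
  have hmid : π / 2 ∈ Set.Ioo 0 π := ⟨by linarith [pi_pos], by linarith [pi_pos]⟩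
  have hev : w =ᶠ[𝓝 (π / 2)] fun _ => (0 : ℝ) :=
    (isOpen_Ioo.eventually_mem hmid).mono fun t ht => hzero t (Set.Ioo_subset_Icc_self ht)
  have hder : -(z (π / 2) / y (π / 2)) ^ 2 = 0 :=
    (hd _ (Set.Ioo_subset_Icc_self hmid)).unique
      ((hasDerivAt_const (π / 2) (0 : ℝ)).congr_of_eventuallyEq hev)
  have hu : z (π / 2) / y (π / 2) = 0 := by simpa using hder
  have := hzero _ (Set.Ioo_subset_Icc_self hmid)
  simp only [hw, hu, sin_pi_div_two] at this
  linarith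

/-- A nonnegative solution on `[0, π]` with a zero there has negative slope at `π`: its zeros are
simple, so they cannot be interior minima. -/
lemma neg_slope_of_touch {c y z : ℝ → ℝ} {K : ℝ} (hK : 1 ≤ K) (hc : ∀ t, |c t| ≤ K)
    (h : Sol c y z) (h0 : y 0 = 1) (hnn : ∀ t ∈ Set.Icc 0 π, 0 ≤ y t) {s : ℝ}
    (hs : s ∈ Set.Icc 0 π) (hys : y s = 0) : z π < 0 := by
  have hne := h.deriv_ne_zero hK hc h0 hys
  have hs0 : s ≠ 0 := by rintro rfl; simp [h0] at hys
  have hs_pos : 0 < s := lt_of_le_of_ne hs.1 hs0.symm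
  have hsπ : s = π := by
    by_contra hsπ
    have hlt : s < π := lt_of_le_of_ne hs.2 hsπ
    have hmin : IsLocalMin y s :=
      (isOpen_Ioo.eventually_mem (show s ∈ Set.Ioo 0 π from ⟨hs_pos, hlt⟩)).mono
        fun t ht => hys ▸ hnn t (Set.Ioo_subset_Icc_self ht)
    exact hne (hmin.hasDerivAt_eq_zero (h.d1 s))
  subst hsπ
  refine lt_of_le_of_ne (not_lt.1 fun hzpos => ?_) hne
  -- A positive slope at the right end would make `y` negative just to the left of it.
  have hsl := (hasDerivAt_iff_tendsto_slope.1 (h.d1 π)).eventually (lt_mem_nhds hzpos)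
  have hsl' : ∀ᶠ t in 𝓝[<] π, 0 < slope y π t :=
    hsl.filter_mono (nhdsWithin_mono _ fun t ht => ne_of_lt ht)
  have hIoo : ∀ᶠ t in 𝓝[<] π, t ∈ Set.Ioo 0 π := Ioo_mem_nhdsLT pi_pos
  obtain ⟨t, ht, htI⟩ := (hsl'.and hIoo).exists
  rw [slope_def_field, hys, sub_zero] at ht
  have := hnn t (Set.Ioo_subset_Icc_self htI)
  exact absurd ht (not_lt.2 (div_nonpos_of_nonneg_of_nonpos this (by linarith [htI.2])))

/-- The coefficient `b cos t + e` with `e = -b sin τ`; it is bounded uniformly in `τ`. -/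
def coeff (b : ℝ) (p : ℝ × ℝ) : ℝ := b * cos p.2 - b * sin p.1

lemma abs_coeff_le {b : ℝ} (hb : 0 < b) (p : ℝ × ℝ) : |coeff b p| ≤ 1 + 2 * b := by
  have h1 := neg_one_le_cos p.2
  have h2 := cos_le_one p.2
  have h3 := neg_one_le_sin p.1
  have h4 := sin_le_one p.1
  rw [coeff, abs_le]
  constructor <;> nlinarith

lemma exists_neg_slope {b : ℝ} (hb : 0 < b) {y z : ℝ × ℝ → ℝ} (hyc : Continuous y)
    (hy0 : ∀ τ, y (τ, 0) = 1) (hz0 : ∀ τ, z (τ, 0) = 0)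
    (hsol : ∀ τ, Sol (fun t => coeff b (τ, t)) (fun t => y (τ, t)) (fun t => z (τ, t)))
    (hend : ∀ t ∈ Set.Icc 0 π, y (π / 2, t) ≠ 0) :
    ∃ τ ∈ Set.Ico 0 (π / 2), z (τ, π) < 0 := by
  have hπ := pi_pos
  have hyt : ∀ τ, Continuous fun t => y (τ, t) := fun τ => by fun_prop
  set Z : Set (ℝ × ℝ) := (Set.Icc 0 (π / 2) ×ˢ Set.Icc 0 π) ∩ y ⁻¹' {0} with hZ
  have hZc : IsCompact Z :=
    (isCompact_Icc.prod isCompact_Icc).inter_right (isClosed_singleton.preimage hyc)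
  by_cases hne : Z.Nonempty
  · obtain ⟨τ, ⟨⟨⟨τ', s⟩, hp, rfl⟩, hmax⟩⟩ :=
      (hZc.image continuous_fst).exists_isGreatest (hne.image _)
    obtain ⟨⟨hτ, hs⟩, hys⟩ := hp
    simp only at hτ hs hmax ⊢
    have hys : y (τ', s) = 0 := hys
    have hlt : τ' < π / 2 := lt_of_le_of_ne hτ.2 fun he => hend s hs (he ▸ hys)
    have hpos : ∀ σ ∈ Set.Ioc τ' (π / 2), ∀ t ∈ Set.Icc 0 π, 0 < y (σ, t) := by
      intro σ hσ
      refine pos_of_ne_zero (hyt σ) (hy0 σ) fun t ht hyz => ?_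
      have : σ ≤ τ' := hmax ⟨(σ, t), ⟨⟨⟨hτ.1.trans hσ.1.le, hσ.2⟩, ht⟩, hyz⟩, rfl⟩
      exact absurd hσ.1 (not_lt.2 this)
    have hnn : ∀ t ∈ Set.Icc 0 π, 0 ≤ y (τ', t) := by
      intro t ht
      have hten : Tendsto (fun σ => y (σ, t)) (𝓝[>] τ') (𝓝 (y (τ', t))) :=
        ((show Continuous fun σ => y (σ, t) by fun_prop).tendsto τ').mono_left
          nhdsWithin_le_nhds
      refine ge_of_tendsto hten ?_
      filter_upwards [Ioc_mem_nhdsGT hlt] with σ hσ using (hpos σ hσ t ht).le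
    exact ⟨τ', ⟨hτ.1, hlt⟩, neg_slope_of_touch (by linarith : 1 ≤ 1 + 2 * b)
      (fun t => abs_coeff_le hb _) (hsol τ') (hy0 τ') hnn hs hys⟩
  · refine ⟨0, ⟨le_rfl, by linarith⟩, ?_⟩
    have h0 : Sol (fun t => b * cos t) (fun t => y (0, t)) (fun t => z (0, t)) := by
      simpa [coeff] using hsol 0
    refine neg_slope_of_pos hb h0 (hz0 0) (pos_of_ne_zero (hyt 0) (hy0 0) fun t ht hyz => ?_)
    exact hne ⟨(0, t), ⟨⟨⟨le_rfl, by linarith⟩, ht⟩, hyz⟩⟩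

/-! ### The eigenfunction -/

lemma exists_eigenfunction {b : ℝ} (hb : 0 < b) :
    ∃ e < 0, ∃ y z : ℝ → ℝ, Sol (fun t => b * cos t + e) y z ∧ y 0 = 1 ∧
      Function.Periodic y (2 * π) ∧ z 0 = 0 ∧ z (2 * π) = 0 := by
  have hπ := pi_pos
  have hK : 1 ≤ 1 + 2 * b := by linarith
  obtain ⟨y, z, hyc, hzc, hy0, hz0, hd1, hd2⟩ := exists_flow (q := coeff b) hK
    (by unfold coeff; fun_prop) (abs_coeff_le hb)
  have hsol : ∀ τ, Sol (fun t => coeff b (τ, t)) (fun t => y (τ, t)) (fun t => z (τ, t)) :=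
    fun τ => ⟨hd1 τ, hd2 τ⟩
  have hrep : ∀ t, 0 ≤ t → 0 < y (π / 2, t) ∧ 0 ≤ z (π / 2, t) := fun t ht =>
    repulsive (hsol (π / 2)) (hy0 _) (hz0 _) (fun t => by
      simp only [coeff, sin_pi_div_two]; nlinarith [cos_le_one t]) ht
  obtain ⟨τ₁, hτ₁, hneg⟩ := exists_neg_slope hb hyc hy0 hz0 hsol fun t ht => (hrep t ht.1).1.ne'
  obtain ⟨τ, hτ, hzτ⟩ := intermediate_value_Icc hτ₁.2.le
    (show Continuous fun τ => z (τ, π) by fun_prop).continuousOn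
    (show (0 : ℝ) ∈ Set.Icc (z (τ₁, π)) (z (π / 2, π)) from ⟨hneg.le, (hrep π hπ.le).2⟩)
  have hτpos : 0 < τ := by
    refine hτ₁.1.trans_lt (lt_of_le_of_ne hτ.1 ?_)
    rintro rfl
    exact hneg.ne hzτ
  have hsin : 0 < sin τ := sin_pos_of_pos_of_lt_pi hτpos (by linarith [hτ.2])
  have hs := hsol τ
  have hc : ∀ t, |coeff b (τ, t)| ≤ 1 + 2 * b := fun t => abs_coeff_le hb _
  have hev : ∀ t, y (τ, -t) = y (τ, t) := fun t => by
    simpa using hs.symm_about hK hc 0 (fun t => by simp [coeff]) (hz0 τ) t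
  have hrefl : ∀ t, y (τ, 2 * π - t) = y (τ, t) := fun t =>
    hs.symm_about hK hc π (fun t => by simp [coeff, cos_two_pi_sub]) hzτ t
  have hper : Function.Periodic (fun t => y (τ, t)) (2 * π) := fun t => by
    have := hrefl (-t)
    rw [hev] at this
    simpa [add_comm] using this
  refine ⟨-(b * sin τ), by nlinarith, fun t => y (τ, t), fun t => z (τ, t), ?_, hy0 τ, hper,
    hz0 τ, ?_⟩
  · simpa [coeff, sub_eq_add_neg] using hs
  · have h1 : HasDerivAt (fun t => y (τ, t + 2 * π)) (z (τ, 0 + 2 * π)) 0 :=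
      (hd1 τ (0 + 2 * π)).comp_add_const 0 (2 * π)
    have h2 : (fun t => y (τ, t + 2 * π)) = fun t => y (τ, t) := funext hper
    rw [h2, zero_add] at h1
    simpa [hz0] using h1.unique (hd1 τ 0)

end Mathieu

open Mathieu in
theorem mathieu_has_negative_eigenvalue (b : ℝ) (hb : 0 < b) :
    (∃ e : ℝ, e < 0 ∧ ∃ g : ℝ → ℝ, g ≠ 0 ∧ ContDiff ℝ (⊤ : ℕ∞) g ∧ Function.Periodic g (2 * π) ∧
      ∀ t, -(deriv (deriv g) t) - b * Real.cos t * g t = e * g t) ∧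
    ∃ g : ℝ → ℝ, g ≠ 0 ∧ ContDiff ℝ (⊤ : ℕ∞) g ∧ Function.Periodic g (2 * π) ∧
      ∫ t in (0 : ℝ)..(2 * π), ((deriv g t) ^ 2 - b * Real.cos t * (g t) ^ 2) < 0 := by
  obtain ⟨e, he, g, z, hs, hg0, hper, hz0, hz1⟩ := exists_eigenfunction hb
  have hne : g ≠ 0 := by
    rintro rfl
    simp at hg0
  have hsm : ContDiff ℝ (⊤ : ℕ∞) g := hs.contDiff (by fun_prop)
  have hdg : deriv g = z := funext fun t => (hs.d1 t).deriv
  have hgc : Continuous g := hs.continuous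
  have hzc : Continuous z := continuous_iff_continuousAt.2 fun t => (hs.d2 t).continuousAt
  refine ⟨⟨e, he, g, hne, hsm, hper, fun t => ?_⟩, g, hne, hsm, hper, ?_⟩
  · rw [hdg, (hs.d2 t).deriv]
    ring
  · rw [hdg]
    have hd : ∀ t, HasDerivAt (fun t => g t * z t)
        (z t * z t + g t * -((b * cos t + e) * g t)) t := fun t => (hs.d1 t).mul (hs.d2 t)
    have hint : ∫ t in (0 : ℝ)..(2 * π), (z t * z t + g t * -((b * cos t + e) * g t)) = 0 := by
      rw [intervalIntegral.integral_eq_sub_of_hasDerivAt (fun t _ => hd t)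
        (Continuous.intervalIntegrable (by fun_prop) _ _), hz0, hz1]
      simp
    have hpos : 0 < ∫ t in (0 : ℝ)..(2 * π), g t ^ 2 :=
      intervalIntegral.integral_pos (by positivity) (by fun_prop) (fun t _ => sq_nonneg _)
        ⟨0, ⟨le_rfl, by positivity⟩, by simp [hg0]⟩
    have hsplit : ∫ t in (0 : ℝ)..(2 * π), (z t ^ 2 - b * cos t * g t ^ 2)
        = (∫ t in (0 : ℝ)..(2 * π), (z t * z t + g t * -((b * cos t + e) * g t)))
          + e * ∫ t in (0 : ℝ)..(2 * π), g t ^ 2 := by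
      rw [← intervalIntegral.integral_const_mul, ← intervalIntegral.integral_add
        (Continuous.intervalIntegrable (by fun_prop) _ _)
        (Continuous.intervalIntegrable (by fun_prop) _ _)]
      refine intervalIntegral.integral_congr fun t _ => ?_
      ring
    rw [hsplit, hint, zero_add]
    exact mul_neg_of_neg_of_pos he hpos
end
end

section
/- For every a, b ∈ ℝ, the set of Mathieu eigenvalues e of M_b with e < a is finite, and every Mathieu eigenvalue of M_b has multiplicity m_b(e) ≤ 2. -/
/-!
Finiteness below `a`. Real and imaginary parts of solutions are solutions, so each eigenvalue has
a nonzero real periodic eigenfunction, and eigenfunctions of distinct eigenvalues are orthogonal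
in `L²(0, 2π)` (`RealSol.orthogonal`). Put `N ≥ (|a| + |b| + 2) π` and suppose there are more than
`N` eigenvalues below `a`. Some nontrivial real combination `g` of their eigenfunctions vanishes at
the `N` points `2πk/N`. By orthogonality `⟨M_b g, g⟩ ≤ a ‖g‖²`, hence
`‖g'‖² = ⟨M_b g, g⟩ + ∫ b cos t g² ≤ (a + |b|) ‖g‖²`. On the other hand, a function vanishing on
such a grid satisfies the Poincaré inequality `‖g'‖² ≥ (|a| + |b| + 1) ‖g‖²` (`poincare_grid`),
a contradiction (`card_le_of_realSol`).

Multiplicity. A solution is determined by `(g 0, g' 0)` (`IsMathieuSol.eq_zero`), so the solution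
space embeds linearly into `ℂ × ℂ`.
-/

open MeasureTheory Real Filter Topology

noncomputable section

def IsMathieuSol (b e : ℝ) (g : ℝ → ℂ) : Prop :=
  ContDiff ℝ (⊤ : ℕ∞) g ∧ Function.Periodic g (2 * π) ∧
    ∀ t, -(deriv (deriv g) t) - (b * Real.cos t : ℂ) * g t = (e : ℂ) * g t

def IsMathieuEV (b e : ℝ) : Prop := ∃ g, g ≠ 0 ∧ IsMathieuSol b e g

/-- multiplicity of a Mathieu eigenvalue (the solution set is a linear subspace, so its
span has the same underlying set and the correct dimension). -/
def mathieuMult (b e : ℝ) : ℕ :=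
  Module.finrank ℂ (Submodule.span ℂ {g : ℝ → ℂ | IsMathieuSol b e g})

/-! ### Real solutions -/

/-- `u` is a `2π`-periodic real solution of `-u'' - b cos t u = e u`, written as a first-order
system with `v = u'`. -/
structure RealSol (b e : ℝ) (u v : ℝ → ℝ) : Prop where
  du : ∀ t, HasDerivAt u (v t) t
  dv : ∀ t, HasDerivAt v (-(b * Real.cos t + e) * u t) t
  pu : Function.Periodic u (2 * π)
  pv : Function.Periodic v (2 * π)

lemma RealSol.cu {b e : ℝ} {u v : ℝ → ℝ} (h : RealSol b e u v) : Continuous u :=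
  continuous_iff_continuousAt.2 fun t => (h.du t).continuousAt

lemma RealSol.cv {b e : ℝ} {u v : ℝ → ℝ} (h : RealSol b e u v) : Continuous v :=
  continuous_iff_continuousAt.2 fun t => (h.dv t).continuousAt

lemma IsMathieuSol.hasDerivAt {b e : ℝ} {g : ℝ → ℂ} (h : IsMathieuSol b e g) (t : ℝ) :
    HasDerivAt g (deriv g t) t :=
  (h.1.differentiable (by simp) t).hasDerivAt

lemma IsMathieuSol.hasDerivAt_deriv {b e : ℝ} {g : ℝ → ℂ} (h : IsMathieuSol b e g) (t : ℝ) :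
    HasDerivAt (deriv g) (-((b * Real.cos t + e : ℝ) : ℂ) * g t) t := by
  have h1 : ContDiff ℝ 1 (deriv g) := by
    have h2 : ContDiff ℝ (1 + 1) g := h.1.of_le (WithTop.coe_le_coe.2 (le_top : (1 + 1 : ℕ∞) ≤ ⊤))
    exact (contDiff_succ_iff_deriv.1 h2).2.2
  have h3 := (h1.differentiable (by simp) t).hasDerivAt
  refine h3.congr_deriv ?_
  have := h.2.2 t
  push_cast at *
  linear_combination -this

lemma IsMathieuSol.periodic_deriv {b e : ℝ} {g : ℝ → ℂ} (h : IsMathieuSol b e g) :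
    Function.Periodic (deriv g) (2 * π) := fun t => by
  rw [← deriv_comp_add_const]
  congr 1
  exact funext h.2.1

/-- The coefficients of the equation are real, so the real or the imaginary part of a nonzero
complex solution is a nonzero real solution. -/
lemma IsMathieuEV.exists_realSol {b e : ℝ} (h : IsMathieuEV b e) :
    ∃ u v : ℝ → ℝ, RealSol b e u v ∧ ∃ t, u t ≠ 0 := by
  obtain ⟨g, hg0, hg⟩ := h
  obtain ⟨t, ht⟩ := Function.ne_iff.1 hg0
  by_cases hre : (g t).re = 0
  · refine ⟨fun t => (g t).im, fun t => (deriv g t).im, ⟨fun t => ?_, fun t => ?_, fun t => ?_,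
      fun t => ?_⟩, t, fun him => ht (Complex.ext hre him)⟩
    · exact Complex.imCLM.hasFDerivAt.comp_hasDerivAt t (hg.hasDerivAt t)
    · have := Complex.imCLM.hasFDerivAt.comp_hasDerivAt t (hg.hasDerivAt_deriv t)
      refine this.congr_deriv ?_
      rw [← Complex.ofReal_neg, Complex.imCLM_apply, Complex.im_ofReal_mul]
    · simp only [hg.2.1 t]
    · simp only [hg.periodic_deriv t]
  · refine ⟨fun t => (g t).re, fun t => (deriv g t).re, ⟨fun t => ?_, fun t => ?_, fun t => ?_,
      fun t => ?_⟩, t, hre⟩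
    · exact Complex.reCLM.hasFDerivAt.comp_hasDerivAt t (hg.hasDerivAt t)
    · have := Complex.reCLM.hasFDerivAt.comp_hasDerivAt t (hg.hasDerivAt_deriv t)
      refine this.congr_deriv ?_
      rw [← Complex.ofReal_neg, Complex.reCLM_apply, Complex.re_ofReal_mul]
    · simp only [hg.2.1 t]
    · simp only [hg.periodic_deriv t]

/-- Solutions for different eigenvalues are orthogonal: `(e₁ - e₂) u₁ u₂` is the derivative of
the Wronskian `u₁ v₂ - v₁ u₂`. -/
lemma RealSol.orthogonal {b e₁ e₂ : ℝ} {u₁ v₁ u₂ v₂ : ℝ → ℝ} (h₁ : RealSol b e₁ u₁ v₁)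
    (h₂ : RealSol b e₂ u₂ v₂) (hne : e₁ ≠ e₂) : ∫ t in (0)..(2 * π), u₁ t * u₂ t = 0 := by
  have hd : ∀ t, HasDerivAt (fun t => u₁ t * v₂ t - v₁ t * u₂ t)
      ((e₁ - e₂) * (u₁ t * u₂ t)) t := fun t => by
    refine (((h₁.du t).mul (h₂.dv t)).sub ((h₁.dv t).mul (h₂.du t))).congr_deriv ?_
    ring
  have hcont : Continuous fun t => (e₁ - e₂) * (u₁ t * u₂ t) :=
    continuous_const.mul (h₁.cu.mul h₂.cu)
  have key := intervalIntegral.integral_eq_sub_of_hasDerivAt (fun t _ => hd t)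
    (hcont.intervalIntegrable 0 (2 * π))
  rw [intervalIntegral.integral_const_mul, h₁.pu.eq, h₁.pv.eq, h₂.pu.eq, h₂.pv.eq, sub_self] at key
  exact (mul_eq_zero.1 key).resolve_left (sub_ne_zero.2 hne)

lemma RealSol.integral_sq_pos {b e : ℝ} {u v : ℝ → ℝ} (h : RealSol b e u v)
    (h0 : ∃ t, u t ≠ 0) : 0 < ∫ t in (0)..(2 * π), u t * u t := by
  obtain ⟨t, ht⟩ := h0
  obtain ⟨y, hy, hty⟩ := h.pu.exists_mem_Ico₀ Real.two_pi_pos t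
  refine intervalIntegral.integral_pos Real.two_pi_pos (h.cu.mul h.cu).continuousOn
    (fun x _ => mul_self_nonneg _) ⟨y, ⟨hy.1, hy.2.le⟩, ?_⟩
  rw [← hty]
  exact mul_self_pos.2 ht

/-! ### A Poincaré inequality for functions vanishing on a grid -/

/-- Poincaré inequality on a short interval `[p, q]`. With `m` the midpoint, the difference of
the integrands plus the derivative of `C (t - m) g²` equals
`(v + C (t - m) g)² + (1 - C² (t - m)²) g² ≥ 0`, and `C (t - m) g²` vanishes at both ends. -/
lemma poincare_interval {g v : ℝ → ℝ} (hd : ∀ t, HasDerivAt g (v t) t) (cg : Continuous g)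
    (cv : Continuous v) {p q C : ℝ} (hpq : p ≤ q) (hC : (C * ((q - p) / 2)) ^ 2 ≤ 1)
    (hp : g p = 0) (hq : g q = 0) :
    (C - 1) * ∫ t in p..q, g t * g t ≤ ∫ t in p..q, v t * v t := by
  set m := (p + q) / 2 with hm
  have hF : ∀ t, HasDerivAt (fun t => -(C * ((t - m) * (g t * g t))))
      (-(C * (g t * g t + (t - m) * (v t * g t + g t * v t)))) t := fun t => by
    have h1 := ((((hasDerivAt_id t).sub_const m).mul ((hd t).mul (hd t))).const_mul C).neg
    refine h1.congr_deriv ?_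
    simp
  have hFc : Continuous fun t => -(C * (g t * g t + (t - m) * (v t * g t + g t * v t))) := by
    fun_prop
  have key := intervalIntegral.integral_eq_sub_of_hasDerivAt (fun t _ => hF t)
    (hFc.intervalIntegrable p q)
  simp only [hp, hq, mul_zero, neg_zero, sub_self] at key
  have hmono : ∫ t in p..q, ((C - 1) * (g t * g t) +
      -(C * (g t * g t + (t - m) * (v t * g t + g t * v t)))) ≤ ∫ t in p..q, v t * v t := by
    refine intervalIntegral.integral_mono_on hpq
      (Continuous.intervalIntegrable (by fun_prop) _ _)
      (Continuous.intervalIntegrable (by fun_prop) _ _) fun t ht => ?_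
    have h2 : (t - m) ^ 2 ≤ ((q - p) / 2) ^ 2 := by
      apply sq_le_sq' <;> rw [hm] <;> linarith [ht.1, ht.2]
    have h3 : (C * (t - m)) ^ 2 ≤ 1 := by
      refine le_trans ?_ hC
      rw [mul_pow, mul_pow]
      exact mul_le_mul_of_nonneg_left h2 (sq_nonneg C)
    have h4 : 0 ≤ (1 - (C * (t - m)) ^ 2) * (g t) ^ 2 :=
      mul_nonneg (by linarith) (sq_nonneg _)
    linarith [sq_nonneg (v t + C * (t - m) * g t)]
  rw [intervalIntegral.integral_add (Continuous.intervalIntegrable (by fun_prop) _ _)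
    (hFc.intervalIntegrable p q), key, intervalIntegral.integral_const_mul, add_zero] at hmono
  exact hmono

lemma poincare_grid {g v : ℝ → ℝ} (hd : ∀ t, HasDerivAt g (v t) t) (cg : Continuous g)
    (cv : Continuous v) {N : ℕ} (hN : 0 < N) {C : ℝ} (hC0 : 0 ≤ C) (hC : C * π ≤ N)
    (hz : ∀ k ≤ N, g (2 * π / N * k) = 0) :
    (C - 1) * ∫ t in (0)..(2 * π), g t * g t ≤ ∫ t in (0)..(2 * π), v t * v t := by
  have hN' : (0 : ℝ) < N := by exact_mod_cast hN
  have hsum : ∀ f : ℝ → ℝ, Continuous f → ∑ k ∈ Finset.range N,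
      ∫ t in (2 * π / N * k)..(2 * π / N * (k + 1 : ℕ)), f t = ∫ t in (0)..(2 * π), f t := by
    intro f hf
    rw [intervalIntegral.sum_integral_adjacent_intervals (a := fun k : ℕ => 2 * π / N * k)
      (fun k _ => hf.intervalIntegrable _ _)]
    simp [div_mul_cancel₀ _ hN'.ne']
  rw [← hsum (fun t => g t * g t) (cg.mul cg), ← hsum (fun t => v t * v t) (cv.mul cv), Finset.mul_sum]
  refine Finset.sum_le_sum fun k hk => ?_
  have hk' := Finset.mem_range.1 hk
  refine poincare_interval hd cg cv ?_ ?_ (hz k hk'.le) (hz (k + 1) hk')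
  · push_cast
    have : 0 ≤ 2 * π / N := by positivity
    nlinarith
  · have : C * ((2 * π / N * (k + 1 : ℕ) - 2 * π / N * k) / 2) = C * π / N := by
      push_cast
      field_simp
      ring
    rw [this]
    refine pow_le_one₀ (by positivity) ?_
    rwa [div_le_one hN']

/-! ### Counting eigenvalues -/

/-- If `N` is large, there are at most `N` eigenvalues below `a`: among more than `N`
eigenfunctions some nontrivial combination vanishes at the `N` grid points, and the Poincaré
inequality then makes its energy too large. -/
lemma card_le_of_realSol {a b : ℝ} {N : ℕ} (hN : 0 < N) (hNC : (|a| + |b| + 2) * π ≤ N)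
    {ι : Type} [Fintype ι] (e : ι → ℝ) (he : Function.Injective e) (hea : ∀ i, e i < a)
    (u v : ι → ℝ → ℝ) (h : ∀ i, RealSol b (e i) (u i) (v i)) (h0 : ∀ i, ∃ t, u i t ≠ 0) :
    Fintype.card ι ≤ N := by
  classical
  by_contra! hcard
  have hN' : (0 : ℝ) < N := by exact_mod_cast hN
  -- A nontrivial combination vanishing at the grid points `2πk/N`, `k < N`.
  let L : (ι → ℝ) →ₗ[ℝ] (Fin N → ℝ) :=
    { toFun := fun c k => ∑ i, c i * u i (2 * π / N * (k : ℕ))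
      map_add' := fun c d => by
        funext k
        simp [add_mul, Finset.sum_add_distrib]
      map_smul' := fun r c => by
        funext k
        simp [Finset.mul_sum, mul_assoc] }
  have hL : LinearMap.ker L ≠ ⊥ := LinearMap.ker_ne_bot_of_finrank_lt (by simpa using hcard)
  obtain ⟨c, hc, hc0⟩ := (Submodule.ne_bot_iff _).1 hL
  have cu := fun i => (h i).cu
  have cv := fun i => (h i).cv
  let g : ℝ → ℝ := fun t => ∑ i, c i * u i t
  let w : ℝ → ℝ := fun t => ∑ i, c i * v i t
  -- `f = M_b g`
  let f : ℝ → ℝ := fun t => ∑ i, c i * e i * u i t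
  have cg : Continuous g := by fun_prop
  have cw : Continuous w := by fun_prop
  have cf : Continuous f := by fun_prop
  have dg : ∀ t, HasDerivAt g (w t) t := fun t =>
    HasDerivAt.fun_sum fun i _ => ((h i).du t).const_mul (c i)
  have dw : ∀ t, HasDerivAt w (-(b * Real.cos t * g t) - f t) t := fun t => by
    refine (HasDerivAt.fun_sum fun i _ => ((h i).dv t).const_mul (c i)).congr_deriv ?_
    simp only [g, f, Finset.mul_sum, ← Finset.sum_neg_distrib, ← Finset.sum_sub_distrib]
    exact Finset.sum_congr rfl fun i _ => by ring
  have pg : g (2 * π) = g 0 := Finset.sum_congr rfl fun i _ => by rw [(h i).pu.eq]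
  have pw : w (2 * π) = w 0 := Finset.sum_congr rfl fun i _ => by rw [(h i).pv.eq]
  have hz' : ∀ k < N, g (2 * π / N * k) = 0 := fun k hk => congrFun (LinearMap.mem_ker.1 hc) ⟨k, hk⟩
  have hz : ∀ k ≤ N, g (2 * π / N * k) = 0 := fun k hk => by
    rcases hk.lt_or_eq with hk | rfl
    · exact hz' k hk
    · rw [div_mul_cancel₀ _ hN'.ne', pg]
      simpa using hz' 0 hN
  have hP := poincare_grid dg cg cw hN (by positivity) hNC hz
  -- Orthogonality diagonalises both quadratic forms.
  have hdiag : ∀ d : ι → ℝ, ∫ t in (0)..(2 * π), (∑ i, d i * u i t) * g t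
      = ∑ i, d i * c i * ∫ t in (0)..(2 * π), u i t * u i t := fun d => by
    have h1 : ∀ t, (∑ i, d i * u i t) * g t = ∑ i, ∑ j, d i * c j * (u i t * u j t) := fun t => by
      rw [Finset.sum_mul_sum]
      exact Finset.sum_congr rfl fun i _ => Finset.sum_congr rfl fun j _ => by ring
    simp only [h1]
    rw [intervalIntegral.integral_finsetSum
      (fun i _ => Continuous.intervalIntegrable (by fun_prop) _ _)]
    refine Finset.sum_congr rfl fun i _ => ?_
    rw [intervalIntegral.integral_finsetSum
      (fun j _ => Continuous.intervalIntegrable (by fun_prop) _ _)]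
    rw [Finset.sum_eq_single i]
    · rw [intervalIntegral.integral_const_mul]
    · intro j _ hj
      rw [intervalIntegral.integral_const_mul, (h i).orthogonal (h j) (he.ne hj.symm), mul_zero]
    · simp
  have hgg : ∫ t in (0)..(2 * π), g t * g t
      = ∑ i, c i * c i * ∫ t in (0)..(2 * π), u i t * u i t := hdiag c
  have hfg : ∫ t in (0)..(2 * π), f t * g t
      = ∑ i, c i * e i * c i * ∫ t in (0)..(2 * π), u i t * u i t := hdiag fun i => c i * e i
  have hpos : 0 < ∫ t in (0)..(2 * π), g t * g t := by
    rw [hgg]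
    obtain ⟨i, hi⟩ := Function.ne_iff.1 hc0
    refine Finset.sum_pos' (fun i _ => mul_nonneg (mul_self_nonneg _)
      ((h i).integral_sq_pos (h0 i)).le) ⟨i, Finset.mem_univ i, ?_⟩
    exact mul_pos (mul_self_pos.2 hi) ((h i).integral_sq_pos (h0 i))
  have hle : ∫ t in (0)..(2 * π), f t * g t ≤ a * ∫ t in (0)..(2 * π), g t * g t := by
    rw [hfg, hgg, Finset.mul_sum]
    refine Finset.sum_le_sum fun i _ => ?_
    have h1 : 0 ≤ c i * c i * ∫ t in (0)..(2 * π), u i t * u i t :=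
      mul_nonneg (mul_self_nonneg _) ((h i).integral_sq_pos (h0 i)).le
    linarith [mul_le_mul_of_nonneg_right (hea i).le h1]
  -- Integration by parts: `∫ w² = ∫ b cos t g² + ∫ f g`.
  have hibp := intervalIntegral.integral_eq_sub_of_hasDerivAt
    (fun t (_ : t ∈ Set.uIcc 0 (2 * π)) => (dg t).mul (dw t))
    (Continuous.intervalIntegrable (by fun_prop) _ _)
  have hbd : ∫ t in (0)..(2 * π), w t * w t ≤
      ∫ t in (0)..(2 * π), ((w t * w t + g t * (-(b * Real.cos t * g t) - f t)) +
        (|b| * (g t * g t) + f t * g t)) := by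
    refine intervalIntegral.integral_mono_on Real.two_pi_pos.le
      (Continuous.intervalIntegrable (by fun_prop) _ _)
      (Continuous.intervalIntegrable (by fun_prop) _ _) fun t _ => ?_
    have h1 : b * Real.cos t ≤ |b| := by
      refine (le_abs_self _).trans ?_
      rw [abs_mul]
      exact mul_le_of_le_one_right (abs_nonneg b) (Real.abs_cos_le_one t)
    linarith [mul_le_mul_of_nonneg_right h1 (mul_self_nonneg (g t))]
  have hsplit₁ : ∫ t in (0)..(2 * π), ((w t * w t + g t * (-(b * Real.cos t * g t) - f t)) +
      (|b| * (g t * g t) + f t * g t)) =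
      (∫ t in (0)..(2 * π), (w t * w t + g t * (-(b * Real.cos t * g t) - f t))) +
        ∫ t in (0)..(2 * π), (|b| * (g t * g t) + f t * g t) :=
    intervalIntegral.integral_add (Continuous.intervalIntegrable (by fun_prop) _ _)
      (Continuous.intervalIntegrable (by fun_prop) _ _)
  have hsplit₂ : ∫ t in (0)..(2 * π), (|b| * (g t * g t) + f t * g t) =
      (∫ t in (0)..(2 * π), |b| * (g t * g t)) + ∫ t in (0)..(2 * π), f t * g t :=
    intervalIntegral.integral_add (Continuous.intervalIntegrable (by fun_prop) _ _)
      (Continuous.intervalIntegrable (by fun_prop) _ _)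
  simp only [Pi.mul_apply] at hibp
  rw [pg, pw, sub_self] at hibp
  rw [hsplit₁, hsplit₂, hibp, intervalIntegral.integral_const_mul, zero_add] at hbd
  have ha := mul_le_mul_of_nonneg_right (le_abs_self a) hpos.le
  linarith

lemma finite_below (a b : ℝ) : {e : ℝ | IsMathieuEV b e ∧ e < a}.Finite := by
  obtain ⟨N, hNC⟩ := exists_nat_ge ((|a| + |b| + 2) * π)
  have hN : 0 < N := by
    have : (0 : ℝ) < N := lt_of_lt_of_le (by positivity) hNC
    exact_mod_cast this
  by_contra hinf
  obtain ⟨s, hs, hcard⟩ := Set.Infinite.exists_subset_card_eq hinf (N + 1)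
  choose u v h h0 using fun i : s => (hs i.2).1.exists_realSol
  have := card_le_of_realSol hN hNC (fun i : s => (i : ℝ)) Subtype.val_injective
    (fun i => (hs i.2).2) u v h h0
  simp [hcard] at this

/-! ### Multiplicity -/

/-- The solution set as a linear subspace. -/
def solSpace (b e : ℝ) : Submodule ℂ (ℝ → ℂ) where
  carrier := {g | IsMathieuSol b e g}
  zero_mem' := by
    refine ⟨contDiff_const, fun t => rfl, fun t => ?_⟩
    have : deriv (0 : ℝ → ℂ) = 0 := by
      funext t
      simp
    simp [this]
  add_mem' := by
    intro g k hg hk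
    refine ⟨hg.1.add hk.1, hg.2.1.add hk.2.1, fun t => ?_⟩
    have h1 : deriv (g + k) = deriv g + deriv k :=
      funext fun t => ((hg.hasDerivAt t).add (hk.hasDerivAt t)).deriv
    rw [h1, ((hg.hasDerivAt_deriv t).add (hk.hasDerivAt_deriv t)).deriv]
    simp only [Pi.add_apply]
    push_cast
    ring
  smul_mem' := by
    intro r g hg
    refine ⟨contDiff_const.smul hg.1, fun t => by simp [hg.2.1 t], fun t => ?_⟩
    have h1 : deriv (r • g) = r • deriv g :=
      funext fun t => ((hg.hasDerivAt t).const_smul r).deriv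
    rw [h1, ((hg.hasDerivAt_deriv t).const_smul r).deriv]
    simp only [Pi.smul_apply, smul_eq_mul]
    push_cast
    ring

/-- Uniqueness for the initial value problem. -/
lemma IsMathieuSol.eq_zero {b e : ℝ} {g : ℝ → ℂ} (h : IsMathieuSol b e g) (h0 : g 0 = 0)
    (h1 : deriv g 0 = 0) : g = 0 := by
  let V : ℝ → ℂ × ℂ → ℂ × ℂ := fun t x => (x.2, -((b * Real.cos t + e : ℝ) : ℂ) * x.1)
  have hV : ∀ t, LipschitzOnWith (Real.toNNReal (1 + |b| + |e|)) (V t) Set.univ := fun t => by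
    refine LipschitzOnWith.of_dist_le_mul fun x _ y _ => ?_
    rw [Real.coe_toNNReal _ (by positivity), dist_eq_norm, dist_eq_norm]
    have hK : ‖-((b * Real.cos t + e : ℝ) : ℂ)‖ ≤ |b| + |e| := by
      rw [norm_neg, Complex.norm_real, Real.norm_eq_abs]
      refine (abs_add_le _ _).trans (add_le_add_left ?_ _)
      rw [abs_mul]
      exact mul_le_of_le_one_right (abs_nonneg b) (Real.abs_cos_le_one t)
    have hx1 : ‖x.1 - y.1‖ ≤ ‖x - y‖ := norm_fst_le (x - y)
    have hx2 : ‖x.2 - y.2‖ ≤ ‖x - y‖ := norm_snd_le (x - y)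
    have hn := norm_nonneg (x - y)
    refine norm_prod_le_iff.2 ⟨?_, ?_⟩
    · change ‖x.2 - y.2‖ ≤ _
      nlinarith [mul_nonneg (abs_nonneg b) hn, mul_nonneg (abs_nonneg e) hn]
    · change ‖-((b * Real.cos t + e : ℝ) : ℂ) * x.1 - -((b * Real.cos t + e : ℝ) : ℂ) * y.1‖ ≤ _
      rw [← mul_sub, norm_mul]
      exact mul_le_mul (by linarith) hx1 (norm_nonneg _) (by positivity)
  have key := ODE_solution_unique_univ (v := V) (s := fun _ => Set.univ) (t₀ := 0)
    (f := fun t => (g t, deriv g t)) (g := fun _ => (0, 0)) hV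
    (fun t => ⟨(h.hasDerivAt t).prodMk (h.hasDerivAt_deriv t), Set.mem_univ _⟩)
    (fun t => ⟨(hasDerivAt_const t ((0, 0) : ℂ × ℂ)).congr_deriv (by simp [V, Prod.ext_iff]), Set.mem_univ _⟩)
    (by simp [h0, h1])
  funext t
  exact congrArg Prod.fst (congrFun key t)

lemma mult_le_two (b e : ℝ) : mathieuMult b e ≤ 2 := by
  have hspan : Submodule.span ℂ {g : ℝ → ℂ | IsMathieuSol b e g} = solSpace b e :=
    Submodule.span_eq (solSpace b e)
  unfold mathieuMult
  rw [hspan]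
  let T : solSpace b e →ₗ[ℂ] ℂ × ℂ :=
    { toFun := fun g => (g.1 0, deriv g.1 0)
      map_add' := fun g k => Prod.ext rfl
        ((IsMathieuSol.hasDerivAt g.2 0).add (IsMathieuSol.hasDerivAt k.2 0)).deriv
      map_smul' := fun r g => Prod.ext rfl ((IsMathieuSol.hasDerivAt g.2 0).const_smul r).deriv }
  have hT : Function.Injective T := by
    rw [← LinearMap.ker_eq_bot, LinearMap.ker_eq_bot']
    intro g hg
    exact Subtype.ext (IsMathieuSol.eq_zero g.2 (congrArg Prod.fst hg) (congrArg Prod.snd hg))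
  simpa using LinearMap.finrank_le_finrank_of_injective hT

theorem mathieu_eigenvalues_finite_below_and_mult_le_two (a b : ℝ) :
    {e : ℝ | IsMathieuEV b e ∧ e < a}.Finite ∧
      ∀ e : ℝ, IsMathieuEV b e → mathieuMult b e ≤ 2 := by
  exact ⟨finite_below a b, fun e _ => mult_le_two b e⟩
end
end

section
/- Let V be a complex vector space and let B₁, B₂ : V × V → ℂ be Hermitian sesquilinear forms; set q_i(ψ) := B_i(ψ, ψ) ∈ ℝ. Then n(q₁ + q₂) ≤ n(q₁) + n(q₂) in ℕ ∪ {∞}, where q₁ + q₂ denotes the function ψ ↦ q₁(ψ) + q₂(ψ). -/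
/-!
A Hermitian form on a finite-dimensional space `W` admits a negative definite subspace `N` and a
positive semidefinite subspace `P` with `dim W ≤ dim N + dim P` (`exists_neg_nonneg`), obtained
by repeatedly splitting off a negative vector and passing to its orthogonal complement.

If `q₁ + q₂` is negative definite on `W`, apply this to both forms. On `P₁ ⊓ P₂` both forms are
nonnegative, so `P₁ ⊓ P₂ = ⊥` and `dim P₁ + dim P₂ ≤ dim W`. Adding the two dimension
inequalities gives `dim W ≤ dim N₁ + dim N₂`. Infinite-dimensional `W` have `finrank` zero and do
not contribute to the supremum.
-/

open scoped ComplexConjugate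

noncomputable section

/-- negativity index of a real quadratic functional `q` on a complex vector space:
the supremum of dimensions of (finite-dimensional) subspaces on whose nonzero
vectors `q` is negative. -/
def negIndex {V : Type*} [AddCommGroup V] [Module ℂ V] (q : V → ℝ) : ℕ∞ :=
  ⨆ W ∈ {W : Submodule ℂ V | ∀ ψ ∈ W, ψ ≠ 0 → q ψ < 0},
    (Module.finrank ℂ W : ℕ∞)

/-- a Hermitian sesquilinear form, given as a plain bi-function:
linear in the second variable and conjugate-symmetric (hence conjugate-linear in
the first variable). -/
structure IsHermitianForm {V : Type*} [AddCommGroup V] [Module ℂ V] (B : V → V → ℂ) : Prop where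
  add_right : ∀ x y z, B x (y + z) = B x y + B x z
  smul_right : ∀ (c : ℂ) (x y), B x (c • y) = c * B x y
  conj_symm : ∀ x y, B x y = conj (B y x)

/-- The expansion of the quadratic form on an orthogonal sum. -/
lemma IsHermitianForm.re_add_smul {V : Type*} [AddCommGroup V] [Module ℂ V]
    {B : V → V → ℂ} (h : IsHermitianForm B) {p n : V} (hpn : B p n = 0) (c : ℂ) :
    (B (n + c • p) (n + c • p)).re = (B n n).re + Complex.normSq c * (B p p).re := by
  have hnp : B n p = 0 := by rw [h.conj_symm, hpn, map_zero]
  have e1 : B (n + c • p) n = B n n := by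
    rw [h.conj_symm, h.add_right, h.smul_right, hnp, mul_zero, add_zero, ← h.conj_symm]
  have e2 : B (n + c • p) p = conj c * B p p := by
    rw [h.conj_symm, h.add_right, h.smul_right, hpn, zero_add, map_mul, ← h.conj_symm]
  rw [h.add_right, h.smul_right, e1, e2, ← mul_assoc, Complex.mul_conj, Complex.add_re,
    Complex.re_ofReal_mul]

/-- A dimension count for diagonalization: inside `W` there are a negative definite and a
positive semidefinite subspace whose dimensions add up to at least that of `W`. -/
lemma IsHermitianForm.exists_neg_nonneg {V : Type*} [AddCommGroup V] [Module ℂ V]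
    {B : V → V → ℂ} (h : IsHermitianForm B) (d : ℕ) :
    ∀ W : Submodule ℂ V, FiniteDimensional ℂ W → Module.finrank ℂ W ≤ d →
      ∃ N P : Submodule ℂ V, N ≤ W ∧ P ≤ W ∧ (∀ ψ ∈ N, ψ ≠ 0 → (B ψ ψ).re < 0) ∧
        (∀ ψ ∈ P, 0 ≤ (B ψ ψ).re) ∧
        Module.finrank ℂ W ≤ Module.finrank ℂ N + Module.finrank ℂ P := by
  induction d with
  | zero =>
    intro W hW hd
    refine ⟨⊥, ⊥, bot_le, bot_le, fun ψ hψ h0 => absurd ((Submodule.mem_bot ℂ).1 hψ) h0, ?_,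
      by omega⟩
    intro ψ hψ
    obtain rfl := (Submodule.mem_bot ℂ).1 hψ
    have := h.smul_right 0 (0 : V) 0
    rw [zero_smul, zero_mul] at this
    simp [this]
  | succ d ih =>
    intro W hW hd
    by_cases hpos : ∀ ψ ∈ W, 0 ≤ (B ψ ψ).re
    · exact ⟨⊥, W, bot_le, le_rfl, fun ψ hψ h0 => absurd ((Submodule.mem_bot ℂ).1 hψ) h0, hpos,
        by omega⟩
    push Not at hpos
    obtain ⟨p, hpW, hp⟩ := hpos
    have hpp : B p p ≠ 0 := fun h0 => by simp [h0] at hp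
    let f : V →ₗ[ℂ] ℂ :=
      { toFun := B p
        map_add' := h.add_right p
        map_smul' := fun c y => h.smul_right c p y }
    have hf : ∀ x, f x = B p x := fun _ => rfl
    set U : Submodule ℂ V := W ⊓ LinearMap.ker f
    have hpU : p ∉ U := fun hm => hpp (hf p ▸ LinearMap.mem_ker.1 hm.2)
    have hlt : U < W := lt_of_le_of_ne inf_le_left fun he => hpU (he ▸ hpW)
    have hfin : FiniteDimensional ℂ U := Submodule.finiteDimensional_of_le hlt.le
    have hltd := Submodule.finrank_lt_finrank_of_lt hlt
    obtain ⟨N, P, hN, hP, hNneg, hPpos, hdim⟩ := ih U hfin (by omega)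
    -- Subtracting from `w` its component along `p` lands in `U`.
    have hle : W ≤ U ⊔ Submodule.span ℂ {p} := by
      intro w hw
      refine Submodule.mem_sup.2 ⟨w - (B p w / B p p) • p, ⟨?_, ?_⟩, (B p w / B p p) • p,
        Submodule.smul_mem _ _ (Submodule.mem_span_singleton_self p), by simp⟩
      · exact W.sub_mem hw (W.smul_mem _ hpW)
      · change f _ = 0
        rw [map_sub, map_smul, hf, hf, smul_eq_mul, div_mul_cancel₀ _ hpp, sub_self]
    have hWdim : Module.finrank ℂ W ≤ Module.finrank ℂ U + 1 :=
      (Submodule.finrank_mono hle).trans <|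
        (Submodule.finrank_add_le_finrank_add_finrank _ _).trans <|
          Nat.add_le_add_left ((finrank_span_le_card ({p} : Set V)).trans (by simp)) _
    have hNfin : FiniteDimensional ℂ N := Submodule.finiteDimensional_of_le hN
    have hNlt : N < N ⊔ Submodule.span ℂ {p} := by
      refine lt_of_le_of_ne le_sup_left fun he => hpU (hN ?_)
      rw [he]
      exact Submodule.mem_sup_right (Submodule.mem_span_singleton_self p)
    have hNdim := Submodule.finrank_lt_finrank_of_lt hNlt
    refine ⟨N ⊔ Submodule.span ℂ {p}, P, ?_, hP.trans hlt.le, ?_, hPpos, by omega⟩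
    · exact sup_le (hN.trans hlt.le) ((Submodule.span_singleton_le_iff_mem _ _).2 hpW)
    · intro ψ hψ h0
      obtain ⟨n, hn, y, hy, rfl⟩ := Submodule.mem_sup.1 hψ
      obtain ⟨c, rfl⟩ := Submodule.mem_span_singleton.1 hy
      have hpn : B p n = 0 := LinearMap.mem_ker.1 (hN hn).2
      rw [h.re_add_smul hpn]
      by_cases hc : c = 0
      · subst hc
        simp only [zero_smul, add_zero] at h0
        simpa using hNneg n hn h0
      · have hcp := mul_neg_of_pos_of_neg (Complex.normSq_pos.2 hc) hp
        by_cases hn0 : n = 0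
        · have h00 : B n n = 0 := by
            have := h.smul_right 0 n n
            rwa [zero_smul, zero_mul, ← hn0] at this
          rw [h00, Complex.zero_re, zero_add]
          exact hcp
        · exact add_neg (hNneg n hn hn0) hcp

theorem negIndex_add_le {V : Type*} [AddCommGroup V] [Module ℂ V]
    (B₁ B₂ : V → V → ℂ) (h₁ : IsHermitianForm B₁) (h₂ : IsHermitianForm B₂) :
    negIndex (fun ψ => (B₁ ψ ψ).re + (B₂ ψ ψ).re) ≤
      negIndex (fun ψ => (B₁ ψ ψ).re) + negIndex (fun ψ => (B₂ ψ ψ).re) := by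
  refine iSup₂_le fun W hW => ?_
  by_cases hfin : FiniteDimensional ℂ W
  swap
  · rw [Module.finrank_of_not_finite hfin]
    simp
  obtain ⟨N₁, P₁, -, hP₁, hN₁neg, hP₁pos, hd₁⟩ := h₁.exists_neg_nonneg _ W hfin le_rfl
  obtain ⟨N₂, P₂, -, hP₂, hN₂neg, hP₂pos, hd₂⟩ := h₂.exists_neg_nonneg _ W hfin le_rfl
  have hinf : P₁ ⊓ P₂ = ⊥ := by
    refine (Submodule.eq_bot_iff _).2 fun ψ hψ => ?_
    by_contra h0
    have hlt : (B₁ ψ ψ).re + (B₂ ψ ψ).re < 0 := hW ψ (hP₁ hψ.1) h0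
    linarith [hP₁pos ψ hψ.1, hP₂pos ψ hψ.2]
  have : FiniteDimensional ℂ P₁ := Submodule.finiteDimensional_of_le hP₁
  have : FiniteDimensional ℂ P₂ := Submodule.finiteDimensional_of_le hP₂
  have hsum := Submodule.finrank_sup_add_finrank_inf_eq P₁ P₂
  rw [hinf, finrank_bot, add_zero] at hsum
  have hsup := Submodule.finrank_mono (sup_le hP₁ hP₂)
  have hdim : Module.finrank ℂ W ≤ Module.finrank ℂ N₁ + Module.finrank ℂ N₂ := by omega
  calc (Module.finrank ℂ W : ℕ∞)
      ≤ (Module.finrank ℂ N₁ : ℕ∞) + (Module.finrank ℂ N₂ : ℕ∞) := by exact_mod_cast hdim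
    _ ≤ _ := add_le_add
      (le_iSup₂_of_le (f := fun (W : Submodule ℂ V)
        (_ : W ∈ {W : Submodule ℂ V | ∀ ψ ∈ W, ψ ≠ 0 → (B₁ ψ ψ).re < 0}) =>
          (Module.finrank ℂ W : ℕ∞)) N₁ hN₁neg le_rfl)
      (le_iSup₂_of_le (f := fun (W : Submodule ℂ V)
        (_ : W ∈ {W : Submodule ℂ V | ∀ ψ ∈ W, ψ ≠ 0 → (B₂ ψ ψ).re < 0}) =>
          (Module.finrank ℂ W : ℕ∞)) N₂ hN₂neg le_rfl)
end
end

section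
/- Let ν > 0, c > 0, and let (k_n)_{n≥1} be a sequence of positive real numbers with k_n·e^{nπ/ν} → c as n → ∞. Then for every E > 0 the set {n ≥ 1 : k_n ≥ √E} is finite, and (card {n ≥ 1 : k_n ≥ √E}) / |log E| → ν/(2π) as E → 0+. -/
/-! Taking logarithms, `log (k n) = log c - n π / ν + o(1)`, so beyond some index `N` the quantity
`log (k n) + n π / ν` lies within `1` of `log c`. Writing `√E ≤ k n` as `log E / 2 ≤ log (k n)`,
the counting set is, apart from indices below `N`, sandwiched between two initial segments of `ℕ`
(`subset_count`, `count_subset`), both of length `(ν / π) (-log E / 2) + O(1)`. Hence the count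
differs from `(ν / (2 π)) |log E|` by at most a
constant (`abs_count_sub_le`), and division by `|log E| → ∞` gives the limit. -/

open Real Filter Topology

noncomputable section

/-- The asymptotics in the form used for counting: an additive bound on logarithms. -/
lemma exists_log_bound (ν c : ℝ) (hc : 0 < c)
    (k : ℕ → ℝ) (hk_pos : ∀ n, 1 ≤ n → 0 < k n)
    (hk_asymp : Tendsto (fun n : ℕ => k n * Real.exp (n * π / ν)) atTop (nhds c)) :
    ∃ N : ℕ, 1 ≤ N ∧ ∀ n, N ≤ n → |Real.log (k n) + n * π / ν - Real.log c| ≤ 1 := by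
  have h := (hk_asymp.log hc.ne').eventually (Metric.closedBall_mem_nhds _ one_pos)
  obtain ⟨N, hN⟩ := eventually_atTop.1 h
  refine ⟨max N 1, le_max_right _ _, fun n hn => ?_⟩
  have h1 := hN n ((le_max_left _ _).trans hn)
  have h2 := hk_pos n ((le_max_right _ _).trans hn)
  rwa [Real.dist_eq,
    Real.log_mul h2.ne' (Real.exp_pos _).ne', Real.log_exp] at h1

lemma sqrt_le_iff_log {E x : ℝ} (hE : 0 < E) (hx : 0 < x) :
    Real.sqrt E ≤ x ↔ Real.log E / 2 ≤ Real.log x := by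
  rw [← Real.log_sqrt hE.le, Real.log_le_log_iff (Real.sqrt_pos.2 hE) hx]

lemma count_subset {ν c : ℝ} (hν : 0 < ν) {k : ℕ → ℝ} (hk_pos : ∀ n, 1 ≤ n → 0 < k n)
    {N : ℕ} (hN : ∀ n, N ≤ n → |Real.log (k n) + n * π / ν - Real.log c| ≤ 1)
    {E : ℝ} (hE : 0 < E) :
    {n : ℕ | 1 ≤ n ∧ Real.sqrt E ≤ k n} ⊆
      (Finset.Icc 1 (N + ⌊ν / π * (-Real.log E / 2 + Real.log c + 1)⌋₊) : Finset ℕ) := by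
  rintro n ⟨hn, hE'⟩
  rw [sqrt_le_iff_log hE (hk_pos n hn)] at hE'
  simp only [Finset.coe_Icc, Set.mem_Icc]
  refine ⟨hn, ?_⟩
  rcases lt_or_ge n N with h | h
  · omega
  · have h1 := (abs_le.1 (hN n h)).2
    have h2 : (n : ℝ) * π / ν ≤ -Real.log E / 2 + Real.log c + 1 := by linarith
    have h3 : (n : ℝ) ≤ ν / π * (-Real.log E / 2 + Real.log c + 1) := by
      calc (n : ℝ) = ν / π * (n * π / ν) := by field_simp
        _ ≤ _ := by gcongr
    have := Nat.le_floor h3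
    omega

lemma subset_count {ν c : ℝ} (hν : 0 < ν) {k : ℕ → ℝ} (hk_pos : ∀ n, 1 ≤ n → 0 < k n)
    {N : ℕ} (hN1 : 1 ≤ N)
    (hN : ∀ n, N ≤ n → |Real.log (k n) + n * π / ν - Real.log c| ≤ 1)
    {E : ℝ} (hE : 0 < E) :
    ((Finset.Icc N ⌊ν / π * (-Real.log E / 2 + Real.log c - 1)⌋₊ : Finset ℕ) : Set ℕ) ⊆
      {n : ℕ | 1 ≤ n ∧ Real.sqrt E ≤ k n} := by
  intro n hn
  simp only [Finset.coe_Icc, Set.mem_Icc] at hn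
  obtain ⟨h, h'⟩ := hn
  have hn1 : 1 ≤ n := hN1.trans h
  refine ⟨hn1, ?_⟩
  rw [sqrt_le_iff_log hE (hk_pos n hn1)]
  have h1 := (abs_le.1 (hN n h)).1
  have h3 := (Nat.le_floor_iff' (by omega)).1 h'
  have h2 : (n : ℝ) * π / ν ≤ -Real.log E / 2 + Real.log c - 1 := by
    calc (n : ℝ) * π / ν = n * (π / ν) := by ring
      _ ≤ ν / π * (-Real.log E / 2 + Real.log c - 1) * (π / ν) := by gcongr
      _ = _ := by field_simp
  linarith

/-- For small `E` the count is `(ν / (2 π)) (-log E)` up to a bounded error. -/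
lemma abs_count_sub_le {ν c : ℝ} (hν : 0 < ν) {k : ℕ → ℝ} (hk_pos : ∀ n, 1 ≤ n → 0 < k n)
    {N : ℕ} (hN1 : 1 ≤ N)
    (hN : ∀ n, N ≤ n → |Real.log (k n) + n * π / ν - Real.log c| ≤ 1)
    {E : ℝ} (hE : 0 < E) (hE' : 0 ≤ -Real.log E / 2 + Real.log c + 1) :
    |({n : ℕ | 1 ≤ n ∧ Real.sqrt E ≤ k n}.ncard : ℝ) - ν / (2 * π) * (-Real.log E)| ≤
      N + ν / π * (|Real.log c| + 1) := by
  have hsub := count_subset hν hk_pos hN hE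
  have hfin := (Finset.finite_toSet _).subset hsub
  have hup := Set.ncard_le_ncard hsub (Finset.finite_toSet _)
  have hlo := Set.ncard_le_ncard (subset_count hν hk_pos hN1 hN hE) hfin
  rw [Set.ncard_coe_finset, Nat.card_Icc] at hup hlo
  have hνπ : 0 < ν / π := by positivity
  have f1 := Nat.floor_le (mul_nonneg hνπ.le hE')
  have f2 := Nat.lt_floor_add_one (ν / π * (-Real.log E / 2 + Real.log c - 1))
  generalize ⌊ν / π * (-Real.log E / 2 + Real.log c + 1)⌋₊ = a at *
  generalize ⌊ν / π * (-Real.log E / 2 + Real.log c - 1)⌋₊ = b at *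
  generalize {n : ℕ | 1 ≤ n ∧ Real.sqrt E ≤ k n}.ncard = m at *
  have hup' : (m : ℝ) ≤ N + a := by exact_mod_cast (by omega : m ≤ N + a)
  have hlo' : (b : ℝ) + 1 ≤ m + N := by exact_mod_cast (by omega : b + 1 ≤ m + N)
  have e1 : ν / (2 * π) * (-Real.log E) = ν / π * (-Real.log E / 2) := by
    field_simp
  have e2 := mul_le_mul_of_nonneg_left (le_abs_self (Real.log c)) hνπ.le
  have e3 := mul_le_mul_of_nonneg_left (neg_abs_le (Real.log c)) hνπ.le
  rw [e1, abs_le]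
  constructor <;> nlinarith

theorem zero_counting_from_exponential_asymptotics
    (ν c : ℝ) (hν : 0 < ν) (hc : 0 < c)
    (k : ℕ → ℝ) (hk_pos : ∀ n, 1 ≤ n → 0 < k n)
    (hk_asymp : Tendsto (fun n : ℕ => k n * Real.exp (n * π / ν)) atTop (nhds c)) :
    (∀ E > (0 : ℝ), {n : ℕ | 1 ≤ n ∧ Real.sqrt E ≤ k n}.Finite) ∧
      Tendsto (fun E : ℝ => ({n : ℕ | 1 ≤ n ∧ Real.sqrt E ≤ k n}.ncard : ℝ) / |Real.log E|)
        (nhdsWithin 0 (Set.Ioi 0)) (nhds (ν / (2 * π))) := by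
  obtain ⟨N, hN1, hN⟩ := exists_log_bound ν c hc k hk_pos hk_asymp
  refine ⟨fun E hE => (Finset.finite_toSet _).subset (count_subset hν hk_pos hN hE), ?_⟩
  have hL : Tendsto (fun E : ℝ => -Real.log E) (𝓝[>] 0) atTop :=
    tendsto_neg_atBot_atTop.comp Real.tendsto_log_nhdsGT_zero
  rw [tendsto_iff_dist_tendsto_zero]
  refine squeeze_zero' (Eventually.of_forall fun _ => dist_nonneg) ?_
    (hL.const_div_atTop (N + ν / π * (|Real.log c| + 1)))
  filter_upwards [self_mem_nhdsWithin, hL.eventually_gt_atTop 0,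
    hL.eventually_ge_atTop (-2 * (Real.log c + 1))] with E hE hpos hge
  have key := abs_count_sub_le hν hk_pos hN1 hN hE (by linarith)
  rw [Real.dist_eq, abs_of_neg (neg_pos.1 hpos), le_div_iff₀ hpos]
  refine le_trans (le_of_eq ?_) key
  rw [← abs_of_pos hpos, ← abs_mul, abs_of_pos hpos, sub_mul, div_mul_cancel₀ _ hpos.ne']
end
end

section
/- Let ν > 0. Then, as x → 0+, K_{iν}(x) = √(π/(ν·sinh(πν)))·sin(ν·log(2/x) + φ_ν) + O(x²); that is, the function x ↦ K_{iν}(x) − √(π/(ν·sinh(πν)))·sin(ν·log(2/x) + φ_ν) is O(x²) as x → 0+. -/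
/-!
Put `a = x²/4`, `c = ν log (2/x)` and `S(a, c) = ∫₀^∞ e^{-u - a/u} sin(ν log u + c) du`. The
substitution `u = x eᵗ/2` turns `K_{iν}(x)` into `½ ∫₀^∞ e^{-u - a/u} cos(ν log u + c) du/u`
(`besselKi_eq_integral`). Integrating by parts (`integral_by_parts`) produces `S(a, c)` and an
integral with weight `a/u²`, which the inversion `u ↦ a/u` maps back to `S(a, c)`
(`integral_reflect`). Hence `K_{iν}(x) = S(a, c)/ν` (`besselKi_eq_sineIntegral`).

At `a = 0` one has `S(0, c) = Im (e^{ic} Γ(1 + iν)) = |Γ(1 + iν)| sin(c + φ_ν)`, and the reflection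
formula gives `|Γ(1 + iν)|² = πν / sinh(πν)`; this is the main term (`sineIntegral_zero`).

It remains to see that `S(a, c) - S(0, c) = O(a)` uniformly in `c`
(`abs_sineIntegral_sub_le`). Now `∂S/∂a = -∫₀^∞ e^{-u - a/u} sin(ν log u + c) du/u`, and the same
integration by parts and inversion express it through values of `S(a, ·)`, which are at most `1` in
absolute value. So `|∂S/∂a| ≤ 2/ν` (`abs_cosIntegral_le`), and the mean value inequality together
with continuity of `S` at `a = 0⁺` concludes.
-/

open MeasureTheory Real Filter Topology Asymptotics

noncomputable section

/-- the modified Bessel function of imaginary order: `K_{iν}(x) = ∫₀^∞ e^{−x cosh t} cos(νt) dt` -/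
def besselKi (ν x : ℝ) : ℝ :=
  ∫ t in Set.Ioi (0 : ℝ), Real.exp (-(x * Real.cosh t)) * Real.cos (ν * t)

/-- `φ_ν = arg Γ(1 + iν)` -/
def gammaPhase (ν : ℝ) : ℝ := Complex.arg (Complex.Gamma (1 + Complex.I * ν))

/-! ### The weight and its integrability -/

/-- The weight `e^{-u - a/u}` on `u > 0`. At `u = 0` it takes a junk value, which no integral
over `(0, ∞)` sees. -/
def kernelE (a u : ℝ) : ℝ := Real.exp (-u - a / u)

/-- `S(a, c) = ∫₀^∞ e^{-u - a/u} sin(ν log u + c) du`. -/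
def sineIntegral (ν a c : ℝ) : ℝ :=
  ∫ u in Set.Ioi (0 : ℝ), kernelE a u * Real.sin (ν * Real.log u + c)

lemma measurable_kernelE (a : ℝ) : Measurable (kernelE a) := by
  unfold kernelE; fun_prop

lemma kernelE_pos (a u : ℝ) : 0 < kernelE a u := Real.exp_pos _

lemma kernelE_le {a u : ℝ} (ha : 0 ≤ a) (hu : 0 < u) : kernelE a u ≤ Real.exp (-u) := by
  unfold kernelE
  gcongr
  have : 0 ≤ a / u := by positivity
  linarith

lemma kernelE_div_le {a u : ℝ} (ha : 0 < a) (hu : 0 < u) :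
    kernelE a u / u ≤ a⁻¹ * Real.exp (-u) := by
  have h0 : 0 < a / u := by positivity
  have h1 : Real.exp (-(a / u)) ≤ (a / u)⁻¹ := by
    rw [Real.exp_neg]
    gcongr
    linarith [Real.add_one_le_exp (a / u)]
  have h2 : kernelE a u = Real.exp (-u) * Real.exp (-(a / u)) := by
    rw [kernelE, sub_eq_add_neg, Real.exp_add]
  rw [h2]
  calc Real.exp (-u) * Real.exp (-(a / u)) / u ≤ Real.exp (-u) * (a / u)⁻¹ / u := by gcongr
    _ = a⁻¹ * Real.exp (-u) := by field_simp

lemma kernelE_div_sq_le {a u : ℝ} (ha : 0 < a) (hu : 0 < u) :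
    a / u ^ 2 * kernelE a u ≤ 2 * a⁻¹ * Real.exp (-u) := by
  have h0 : 0 < a / u := by positivity
  have h1 : Real.exp (-(a / u)) ≤ ((a / u) ^ 2 / 2)⁻¹ := by
    rw [Real.exp_neg]
    gcongr
    linarith [Real.quadratic_le_exp_of_nonneg h0.le]
  have h2 : kernelE a u = Real.exp (-u) * Real.exp (-(a / u)) := by
    rw [kernelE, sub_eq_add_neg, Real.exp_add]
  rw [h2]
  calc a / u ^ 2 * (Real.exp (-u) * Real.exp (-(a / u)))
      ≤ a / u ^ 2 * (Real.exp (-u) * ((a / u) ^ 2 / 2)⁻¹) := by gcongr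
    _ = 2 * a⁻¹ * Real.exp (-u) := by field_simp

/-- Functions on `(0, ∞)` dominated by a multiple of `e^{-u}` are integrable. -/
lemma integrableOn_of_le_exp {f : ℝ → ℝ} (hf : Measurable f) (C : ℝ)
    (h : ∀ u, 0 < u → |f u| ≤ C * Real.exp (-u)) : IntegrableOn f (Set.Ioi 0) := by
  refine Integrable.mono' ((integrableOn_exp_neg_Ioi 0).const_mul C) hf.aestronglyMeasurable ?_
  filter_upwards [ae_restrict_mem measurableSet_Ioi] with u hu
  exact h u hu

lemma integrable_kernelE_mul {a : ℝ} (ha : 0 ≤ a) {g : ℝ → ℝ} (hg : Measurable g)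
    (hg1 : ∀ u, |g u| ≤ 1) : IntegrableOn (fun u => kernelE a u * g u) (Set.Ioi 0) := by
  refine integrableOn_of_le_exp ((measurable_kernelE a).mul hg) 1 fun u hu => ?_
  rw [abs_mul, abs_of_pos (kernelE_pos a u)]
  calc kernelE a u * |g u| ≤ Real.exp (-u) * 1 :=
        mul_le_mul (kernelE_le ha hu) (hg1 u) (abs_nonneg _) (Real.exp_pos _).le
    _ = 1 * Real.exp (-u) := by ring

lemma integrable_kernelE_div_mul {a : ℝ} (ha : 0 < a) {g : ℝ → ℝ} (hg : Measurable g)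
    (hg1 : ∀ u, |g u| ≤ 1) : IntegrableOn (fun u => kernelE a u / u * g u) (Set.Ioi 0) := by
  refine integrableOn_of_le_exp (((measurable_kernelE a).div measurable_id).mul hg) a⁻¹
    fun u hu => ?_
  have hu : 0 < u := hu
  have := kernelE_pos a u
  rw [abs_mul, abs_of_pos (by positivity)]
  calc kernelE a u / u * |g u| ≤ (a⁻¹ * Real.exp (-u)) * 1 :=
        mul_le_mul (kernelE_div_le ha hu) (hg1 u) (abs_nonneg _) (by positivity)
    _ = a⁻¹ * Real.exp (-u) := by ring

lemma integrable_kernelE_div_sq_mul {a : ℝ} (ha : 0 < a) {g : ℝ → ℝ} (hg : Measurable g)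
    (hg1 : ∀ u, |g u| ≤ 1) :
    IntegrableOn (fun u => a / u ^ 2 * kernelE a u * g u) (Set.Ioi 0) := by
  have hm := measurable_kernelE a
  refine integrableOn_of_le_exp (by fun_prop) (2 * a⁻¹) fun u hu => ?_
  have := kernelE_pos a u
  rw [abs_mul, abs_of_pos (by positivity)]
  calc a / u ^ 2 * kernelE a u * |g u| ≤ (2 * a⁻¹ * Real.exp (-u)) * 1 :=
        mul_le_mul (kernelE_div_sq_le ha hu) (hg1 u) (abs_nonneg _) (by positivity)
    _ = 2 * a⁻¹ * Real.exp (-u) := by ring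

/-! ### Inversion and integration by parts -/

/-- The substitution `u ↦ a / u` on `(0, ∞)`. -/
lemma integral_comp_const_div {a : ℝ} (ha : 0 < a) (f : ℝ → ℝ) :
    ∫ u in Set.Ioi (0 : ℝ), a / u ^ 2 * f (a / u) = ∫ u in Set.Ioi (0 : ℝ), f u := by
  have himg : (fun u : ℝ => a / u) '' Set.Ioi 0 = Set.Ioi 0 := by
    ext y
    simp only [Set.mem_image, Set.mem_Ioi]
    constructor
    · rintro ⟨u, hu, rfl⟩
      positivity
    · intro hy
      exact ⟨a / y, by positivity, by field_simp⟩
  have hd : ∀ u ∈ Set.Ioi (0 : ℝ),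
      HasDerivWithinAt (fun u : ℝ => a / u) (-(a / u ^ 2)) (Set.Ioi 0) u := by
    intro u hu
    have hu : 0 < u := hu
    have h : HasDerivAt (fun u : ℝ => a / u) (a * -(u ^ 2)⁻¹) u := by
      simpa only [div_eq_mul_inv] using (hasDerivAt_inv hu.ne').const_mul a
    exact (h.congr_deriv (by ring)).hasDerivWithinAt
  have hinj : Set.InjOn (fun u : ℝ => a / u) (Set.Ioi 0) := by
    intro u hu v hv huv
    have hu : 0 < u := hu
    have hv : 0 < v := hv
    simp only at huv
    field_simp at huv
    linarith
  have := integral_image_eq_integral_abs_deriv_smul measurableSet_Ioi hd hinj f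
  rw [himg] at this
  rw [this]
  refine setIntegral_congr_fun measurableSet_Ioi fun u hu => ?_
  have hu : 0 < u := hu
  simp only [smul_eq_mul]
  rw [abs_neg, abs_of_pos (by positivity)]

lemma kernelE_const_div {a u : ℝ} (ha : 0 < a) (hu : 0 < u) :
    kernelE a (a / u) = kernelE a u := by
  unfold kernelE
  congr 1
  field_simp
  ring

lemma hasDerivAt_kernelE {u : ℝ} (a : ℝ) (hu : 0 < u) :
    HasDerivAt (kernelE a) (a / u ^ 2 * kernelE a u - kernelE a u) u := by
  have h : HasDerivAt (fun u : ℝ => -u - a / u) (-1 - a * -(u ^ 2)⁻¹) u := by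
    simpa only [div_eq_mul_inv] using
      (hasDerivAt_neg u).fun_sub ((hasDerivAt_inv hu.ne').const_mul a)
  exact h.exp.congr_deriv (by rw [kernelE]; ring)

lemma hasDerivAt_phase {u : ℝ} (ν c : ℝ) (hu : 0 < u) :
    HasDerivAt (fun u => Real.sin (ν * Real.log u + c))
      (ν * (Real.cos (ν * Real.log u + c) / u)) u := by
  have h := (((Real.hasDerivAt_log hu.ne').const_mul ν).add_const c).sin
  convert h using 1
  field_simp

/-- Integration by parts against `d(sin(ν log u + c)) = ν cos(ν log u + c) du / u`. Both boundary
terms vanish because `e^{-u - a/u}` tends to `0` at `0⁺` and at `∞`. -/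
lemma integral_by_parts {a : ℝ} (ha : 0 < a) (ν c : ℝ) :
    ν * ∫ u in Set.Ioi (0 : ℝ), kernelE a u / u * Real.cos (ν * Real.log u + c) =
      sineIntegral ν a c -
        ∫ u in Set.Ioi (0 : ℝ), a / u ^ 2 * kernelE a u * Real.sin (ν * Real.log u + c) := by
  have hms : Measurable fun u : ℝ => Real.sin (ν * Real.log u + c) := by fun_prop
  have hmc : Measurable fun u : ℝ => Real.cos (ν * Real.log u + c) := by fun_prop
  have hs1 : ∀ u : ℝ, |Real.sin (ν * Real.log u + c)| ≤ 1 := fun u => Real.abs_sin_le_one _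
  have hc1 : ∀ u : ℝ, |Real.cos (ν * Real.log u + c)| ≤ 1 := fun u => Real.abs_cos_le_one _
  have i1 := integrable_kernelE_mul ha.le hms hs1
  have i2 := integrable_kernelE_div_sq_mul ha hms hs1
  have i3 := integrable_kernelE_div_mul ha hmc hc1
  have hbd : ∀ u : ℝ, ‖kernelE a u * Real.sin (ν * Real.log u + c)‖ ≤ kernelE a u := by
    intro u
    rw [norm_mul, Real.norm_eq_abs, Real.norm_eq_abs, abs_of_pos (kernelE_pos a u)]
    exact mul_le_of_le_one_right (kernelE_pos a u).le (hs1 u)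
  have hzero : Tendsto (kernelE a * fun u => Real.sin (ν * Real.log u + c)) (𝓝[>] 0) (𝓝 0) := by
    -- near `0` the weight is at most `u / a`, by the bound on `kernelE a u / u`
    have hlim : Tendsto (fun u : ℝ => u * a⁻¹) (𝓝[>] 0) (𝓝 0) := by
      have : Tendsto (fun u : ℝ => u * a⁻¹) (𝓝 0) (𝓝 (0 * a⁻¹)) :=
        (continuous_id.mul continuous_const).tendsto 0
      rw [zero_mul] at this
      exact this.mono_left nhdsWithin_le_nhds
    refine squeeze_zero_norm' ?_ hlim
    filter_upwards [self_mem_nhdsWithin] with u hu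
    have hu : 0 < u := hu
    refine (hbd u).trans ?_
    have h1 := kernelE_div_le ha hu
    rw [div_le_iff₀ hu] at h1
    have h2 : Real.exp (-u) ≤ 1 := Real.exp_le_one_iff.2 (by linarith)
    calc kernelE a u ≤ a⁻¹ * Real.exp (-u) * u := h1
      _ ≤ a⁻¹ * 1 * u := by gcongr
      _ = u * a⁻¹ := by ring
  have htop : Tendsto (kernelE a * fun u => Real.sin (ν * Real.log u + c)) atTop (𝓝 0) := by
    refine squeeze_zero_norm' ?_ Real.tendsto_exp_neg_atTop_nhds_zero
    filter_upwards [eventually_gt_atTop 0] with u hu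
    exact (hbd u).trans (kernelE_le ha.le hu)
  have key := integral_Ioi_mul_deriv_eq_deriv_mul (a := 0) (a' := 0) (b' := 0)
    (u := kernelE a) (v := fun u => Real.sin (ν * Real.log u + c))
    (u' := fun u => a / u ^ 2 * kernelE a u - kernelE a u)
    (v' := fun u => ν * (Real.cos (ν * Real.log u + c) / u))
    (fun u hu => hasDerivAt_kernelE a hu) (fun u hu => hasDerivAt_phase ν c hu)
    ((i3.const_mul ν).congr (ae_of_all _ fun u => by simp only [Pi.mul_apply]; ring))
    ((i2.sub i1).congr (ae_of_all _ fun u => by simp only [Pi.mul_apply, Pi.sub_apply]; ring))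
    hzero htop
  have e1 : ∫ u in Set.Ioi (0 : ℝ), kernelE a u * (ν * (Real.cos (ν * Real.log u + c) / u)) =
      ν * ∫ u in Set.Ioi (0 : ℝ), kernelE a u / u * Real.cos (ν * Real.log u + c) := by
    rw [← integral_const_mul]
    congr 1 with u
    ring
  have e2 : ∫ u in Set.Ioi (0 : ℝ), (a / u ^ 2 * kernelE a u - kernelE a u) *
        Real.sin (ν * Real.log u + c) =
      (∫ u in Set.Ioi (0 : ℝ), a / u ^ 2 * kernelE a u * Real.sin (ν * Real.log u + c)) -
        sineIntegral ν a c := by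
    rw [sineIntegral, ← integral_sub i2 i1]
    congr 1 with u
    ring
  rw [e1, e2] at key
  rw [key]
  ring

/-- The inversion `u ↦ a / u` turns the second integral of the integration by parts into another
value of `S(a, ·)`. -/
lemma integral_reflect {a : ℝ} (ha : 0 < a) (ν c : ℝ) :
    ∫ u in Set.Ioi (0 : ℝ), a / u ^ 2 * kernelE a u * Real.sin (ν * Real.log u + c) =
      - sineIntegral ν a (-(ν * Real.log a + c)) := by
  rw [sineIntegral, ← integral_comp_const_div ha
    (fun u => kernelE a u * Real.sin (ν * Real.log u + -(ν * Real.log a + c))), ← integral_neg]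
  refine setIntegral_congr_fun measurableSet_Ioi fun u hu => ?_
  have hu : 0 < u := hu
  rw [kernelE_const_div ha hu, Real.log_div ha.ne' hu.ne',
    show ν * (Real.log a - Real.log u) + -(ν * Real.log a + c) = -(ν * Real.log u + c) by ring,
    Real.sin_neg]
  ring

lemma abs_sineIntegral_le {a : ℝ} (ha : 0 < a) (ν c : ℝ) : |sineIntegral ν a c| ≤ 1 := by
  rw [← integral_exp_neg_Ioi_zero, ← Real.norm_eq_abs]
  refine norm_integral_le_of_norm_le (integrableOn_exp_neg_Ioi 0) ?_
  filter_upwards [ae_restrict_mem measurableSet_Ioi] with u hu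
  rw [norm_mul, Real.norm_eq_abs, Real.norm_eq_abs, abs_of_pos (kernelE_pos a u)]
  exact (mul_le_of_le_one_right (kernelE_pos a u).le (Real.abs_sin_le_one _)).trans
    (kernelE_le ha.le hu)

/-- The integral `∫₀^∞ e^{-u - a/u} cos(ν log u + c) du / u` stays bounded as `a → 0⁺`, uniformly
in the phase `c`: this is where the oscillation prevents a logarithmic divergence. -/
lemma abs_cosIntegral_le {a ν : ℝ} (ha : 0 < a) (hν : 0 < ν) (c : ℝ) :
    |∫ u in Set.Ioi (0 : ℝ), kernelE a u / u * Real.cos (ν * Real.log u + c)| ≤ 2 / ν := by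
  have h := integral_by_parts ha ν c
  rw [integral_reflect ha] at h
  rw [le_div_iff₀ hν]
  have h1 := abs_sineIntegral_le ha ν c
  have h2 := abs_sineIntegral_le ha ν (-(ν * Real.log a + c))
  rw [abs_le] at h1 h2
  set J := ∫ u in Set.Ioi (0 : ℝ), kernelE a u / u * Real.cos (ν * Real.log u + c)
  have h3 : |J| * ν = |ν * J| := by rw [abs_mul, abs_of_pos hν, mul_comm]
  rw [h3, h, abs_le]
  constructor <;> linarith

/-! ### Dependence of the sine integral on `a` -/

lemma hasDerivAt_sineIntegral {a : ℝ} (ha : 0 < a) (ν c : ℝ) :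
    HasDerivAt (fun a => sineIntegral ν a c)
      (∫ u in Set.Ioi (0 : ℝ), -(kernelE a u / u * Real.sin (ν * Real.log u + c))) a := by
  have hms : Measurable fun u : ℝ => Real.sin (ν * Real.log u + c) := by fun_prop
  have hs1 : ∀ u : ℝ, |Real.sin (ν * Real.log u + c)| ≤ 1 := fun u => Real.abs_sin_le_one _
  refine (hasDerivAt_integral_of_dominated_loc_of_deriv_le
    (F := fun a u => kernelE a u * Real.sin (ν * Real.log u + c))
    (F' := fun a u => -(kernelE a u / u * Real.sin (ν * Real.log u + c)))
    (bound := fun u => (a / 2)⁻¹ * Real.exp (-u)) (s := Set.Ioi (a / 2))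
    (Ioi_mem_nhds (by linarith)) (Eventually.of_forall fun b => ?_)
    (integrable_kernelE_mul ha.le hms hs1) ?_ ?_
    ((integrableOn_exp_neg_Ioi 0).const_mul _) ?_).2
  · exact ((measurable_kernelE b).mul hms).aestronglyMeasurable
  · exact (integrable_kernelE_div_mul ha hms hs1).neg.aestronglyMeasurable
  · filter_upwards [ae_restrict_mem measurableSet_Ioi] with u hu b hb
    have hu : 0 < u := hu
    have hb : a / 2 < b := hb
    have hb0 : 0 < b := by linarith
    have := kernelE_pos b u
    rw [norm_neg, norm_mul, Real.norm_eq_abs, Real.norm_eq_abs, abs_of_pos (by positivity)]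
    calc kernelE b u / u * |Real.sin (ν * Real.log u + c)|
        ≤ kernelE b u / u := mul_le_of_le_one_right (by positivity) (hs1 u)
      _ ≤ b⁻¹ * Real.exp (-u) := kernelE_div_le hb0 hu
      _ ≤ (a / 2)⁻¹ * Real.exp (-u) := by gcongr
  · filter_upwards [ae_restrict_mem measurableSet_Ioi] with u hu b hb
    have hu : 0 < u := hu
    have h : HasDerivAt (fun b : ℝ => -u - b / u) (-(1 / u)) b :=
      ((hasDerivAt_id' b).div_const u).const_sub (-u)
    exact (h.exp.mul_const (Real.sin (ν * Real.log u + c))).congr_deriv (by rw [kernelE]; ring)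

lemma tendsto_sineIntegral (ν c : ℝ) :
    Tendsto (fun a => sineIntegral ν a c) (𝓝[>] 0) (𝓝 (sineIntegral ν 0 c)) := by
  refine tendsto_integral_filter_of_dominated_convergence (fun u => Real.exp (-u))
    (Eventually.of_forall fun b => ?_) ?_ (integrableOn_exp_neg_Ioi 0)
    (ae_of_all _ fun u => ?_)
  · have := measurable_kernelE b
    exact Measurable.aestronglyMeasurable (by fun_prop)
  · filter_upwards [self_mem_nhdsWithin] with b hb
    filter_upwards [ae_restrict_mem measurableSet_Ioi] with u hu
    have hb : 0 < b := hb
    rw [norm_mul, Real.norm_eq_abs, Real.norm_eq_abs, abs_of_pos (kernelE_pos b u)]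
    exact (mul_le_of_le_one_right (kernelE_pos b u).le (Real.abs_sin_le_one _)).trans
      (kernelE_le hb.le hu)
  · have : Continuous fun b => kernelE b u * Real.sin (ν * Real.log u + c) := by
      unfold kernelE
      fun_prop
    exact (this.tendsto 0).mono_left nhdsWithin_le_nhds

/-- Uniformly in the phase `c`, `S(a, c)` is Lipschitz in `a` up to `a = 0`. -/
lemma abs_sineIntegral_sub_le {a ν : ℝ} (ha : 0 < a) (hν : 0 < ν) (c : ℝ) :
    |sineIntegral ν a c - sineIntegral ν 0 c| ≤ 2 / ν * a := by
  have hder : ∀ b ∈ Set.Ioi (0 : ℝ), HasDerivWithinAt (fun a => sineIntegral ν a c)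
      (∫ u in Set.Ioi (0 : ℝ), -(kernelE b u / u * Real.sin (ν * Real.log u + c)))
      (Set.Ioi 0) b := fun b hb => (hasDerivAt_sineIntegral hb ν c).hasDerivWithinAt
  have hbd : ∀ b ∈ Set.Ioi (0 : ℝ),
      ‖∫ u in Set.Ioi (0 : ℝ), -(kernelE b u / u * Real.sin (ν * Real.log u + c))‖ ≤ 2 / ν := by
    intro b hb
    rw [integral_neg, norm_neg, Real.norm_eq_abs]
    have h := abs_cosIntegral_le hb hν (c - π / 2)
    simp only [← add_sub_assoc, Real.cos_sub_pi_div_two] at h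
    exact h
  have hlip : ∀ᶠ b in 𝓝[>] (0 : ℝ),
      |sineIntegral ν a c - sineIntegral ν b c| ≤ 2 / ν * |a - b| := by
    filter_upwards [self_mem_nhdsWithin] with b hb
    exact Convex.norm_image_sub_le_of_norm_hasDerivWithin_le hder hbd (convex_Ioi 0) hb ha
  have l1 : Tendsto (fun b => |sineIntegral ν a c - sineIntegral ν b c|) (𝓝[>] 0)
      (𝓝 |sineIntegral ν a c - sineIntegral ν 0 c|) :=
    (tendsto_const_nhds.sub (tendsto_sineIntegral ν c)).abs
  have l2 : Tendsto (fun b : ℝ => 2 / ν * |a - b|) (𝓝[>] 0) (𝓝 (2 / ν * |a - 0|)) := by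
    have : Continuous fun b : ℝ => 2 / ν * |a - b| := by fun_prop
    exact (this.tendsto 0).mono_left nhdsWithin_le_nhds
  have := le_of_tendsto_of_tendsto l1 l2 hlip
  rwa [sub_zero, abs_of_pos ha] at this

/-! ### The Bessel function as a sine integral -/

/-- The substitution `u = x eᵗ / 2` after symmetrizing the integral over `t ∈ ℝ`; it gives
`x cosh t = u + (x²/4) / u`. -/
lemma besselKi_eq_integral {x : ℝ} (hx : 0 < x) (ν : ℝ) :
    besselKi ν x = 1 / 2 * ∫ u in Set.Ioi (0 : ℝ),
      kernelE (x ^ 2 / 4) u / u * Real.cos (ν * Real.log u + ν * Real.log (2 / x)) := by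
  have habs := integral_comp_abs (f := fun t => Real.exp (-(x * Real.cosh t)) * Real.cos (ν * t))
  have heven : ∀ t : ℝ, Real.exp (-(x * Real.cosh |t|)) * Real.cos (ν * |t|) =
      Real.exp (-(x * Real.cosh t)) * Real.cos (ν * t) := by
    intro t
    rcases abs_cases t with ⟨h, _⟩ | ⟨h, _⟩ <;> simp [h]
  simp only [heven] at habs
  have himg : (fun u : ℝ => Real.log u + Real.log (2 / x)) '' Set.Ioi 0 = Set.univ := by
    refine Set.eq_univ_of_forall fun t => ⟨Real.exp (t - Real.log (2 / x)), Real.exp_pos _, ?_⟩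
    simp
  have hd : ∀ u ∈ Set.Ioi (0 : ℝ),
      HasDerivWithinAt (fun u : ℝ => Real.log u + Real.log (2 / x)) u⁻¹ (Set.Ioi 0) u :=
    fun u hu => ((Real.hasDerivAt_log (ne_of_gt hu)).add_const _).hasDerivWithinAt
  have hinj : Set.InjOn (fun u : ℝ => Real.log u + Real.log (2 / x)) (Set.Ioi 0) :=
    fun u hu v hv huv => Real.log_injOn_pos hu hv (add_right_cancel huv)
  have hsub := integral_image_eq_integral_abs_deriv_smul measurableSet_Ioi hd hinj
    (fun t => Real.exp (-(x * Real.cosh t)) * Real.cos (ν * t))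
  rw [himg, setIntegral_univ] at hsub
  have hK : besselKi ν x = 1 / 2 * ∫ t, Real.exp (-(x * Real.cosh t)) * Real.cos (ν * t) := by
    rw [habs, besselKi]
    ring
  rw [hK, hsub]
  congr 1
  refine setIntegral_congr_fun measurableSet_Ioi fun u hu => ?_
  have hu : 0 < u := hu
  simp only [smul_eq_mul]
  rw [abs_of_pos (by positivity), ← mul_add]
  have hcosh : x * Real.cosh (Real.log u + Real.log (2 / x)) = u + x ^ 2 / 4 / u := by
    rw [← Real.log_mul hu.ne' (by positivity), Real.cosh_log (by positivity)]
    field_simp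
    ring
  rw [hcosh, kernelE, neg_add']
  ring

lemma besselKi_eq_sineIntegral {x ν : ℝ} (hx : 0 < x) (hν : 0 < ν) :
    besselKi ν x = 1 / ν * sineIntegral ν (x ^ 2 / 4) (ν * Real.log (2 / x)) := by
  have ha : 0 < x ^ 2 / 4 := by positivity
  have h := integral_by_parts ha ν (ν * Real.log (2 / x))
  -- the phase is chosen so that `log (x²/4) = -2 log (2/x)` makes the reflected phase equal to it
  have hlog : -(ν * Real.log (x ^ 2 / 4) + ν * Real.log (2 / x)) = ν * Real.log (2 / x) := by
    have : x ^ 2 / 4 = ((2 / x) ^ 2)⁻¹ := by field_simp; norm_num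
    rw [this, Real.log_inv, Real.log_pow]
    push_cast
    ring
  rw [integral_reflect ha, hlog] at h
  rw [besselKi_eq_integral hx]
  rw [div_mul_eq_mul_div, one_mul, div_mul_eq_mul_div, one_mul, div_eq_div_iff two_ne_zero hν.ne']
  linarith

/-! ### The value at `a = 0` and the asymptotics -/

lemma norm_Gamma_one_add {ν : ℝ} (hν : 0 < ν) :
    ‖Complex.Gamma (1 + Complex.I * ν)‖ = Real.sqrt (π * ν / Real.sinh (π * ν)) := by
  have hz : Complex.I * (ν : ℂ) ≠ 0 :=
    mul_ne_zero Complex.I_ne_zero (Complex.ofReal_ne_zero.2 hν.ne')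
  have hs : 0 < Real.sinh (π * ν) := Real.sinh_pos_iff.2 (by positivity)
  have hrefl := Complex.Gamma_mul_Gamma_one_sub (Complex.I * ν)
  have hsucc := Complex.Gamma_add_one (Complex.I * ν) hz
  have hconj : Complex.Gamma (1 - Complex.I * ν) =
      (starRingEnd ℂ) (Complex.Gamma (1 + Complex.I * ν)) := by
    rw [← Complex.Gamma_conj]
    simp [sub_eq_add_neg]
  have hsin : Complex.sin (π * (Complex.I * ν)) = Real.sinh (π * ν) * Complex.I := by
    rw [show (π : ℂ) * (Complex.I * ν) = (π * ν : ℂ) * Complex.I by ring, Complex.sin_mul_I]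
    push_cast
    rfl
  have hsq : Complex.normSq (Complex.Gamma (1 + Complex.I * ν)) = π * ν / Real.sinh (π * ν) := by
    have hs' : (Real.sinh (π * ν) : ℂ) ≠ 0 := Complex.ofReal_ne_zero.2 hs.ne'
    apply Complex.ofReal_injective
    rw [← Complex.mul_conj, ← hconj, add_comm 1, hsucc, mul_assoc, hrefl, hsin, Complex.ofReal_div,
      Complex.ofReal_mul]
    field_simp [Complex.I_ne_zero]
  rw [← hsq, Complex.norm_def]

/-- At `a = 0` the integral is `Im (e^{ic} Γ(1 + iν))`. -/
lemma sineIntegral_zero {ν : ℝ} (hν : 0 < ν) (c : ℝ) :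
    sineIntegral ν 0 c =
      Real.sqrt (π * ν / Real.sinh (π * ν)) * Real.sin (c + gammaPhase ν) := by
  have hre : 0 < (1 + Complex.I * (ν : ℂ)).re := by simp
  have hint := (Complex.GammaIntegral_convergent hre).const_mul (Complex.exp (c * Complex.I))
  have him := integral_im hint
  have hG : ∫ u in Set.Ioi (0 : ℝ), Complex.exp (c * Complex.I) *
      (↑(Real.exp (-u)) * (u : ℂ) ^ (1 + Complex.I * (ν : ℂ) - 1)) =
      Complex.exp (c * Complex.I) * Complex.Gamma (1 + Complex.I * ν) := by
    rw [integral_const_mul, Complex.Gamma_eq_integral hre, Complex.GammaIntegral]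
  rw [hG] at him
  have hL : sineIntegral ν 0 c = ∫ u in Set.Ioi (0 : ℝ), RCLike.im (Complex.exp (c * Complex.I) *
      (↑(Real.exp (-u)) * (u : ℂ) ^ (1 + Complex.I * (ν : ℂ) - 1))) := by
    refine setIntegral_congr_fun measurableSet_Ioi fun u hu => ?_
    have hu : 0 < u := hu
    have e : Complex.exp (c * Complex.I) *
        (↑(Real.exp (-u)) * (u : ℂ) ^ (1 + Complex.I * (ν : ℂ) - 1)) =
        (Real.exp (-u) : ℂ) * Complex.exp (((ν * Real.log u + c : ℝ) : ℂ) * Complex.I) := by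
      rw [Complex.cpow_def_of_ne_zero (Complex.ofReal_ne_zero.2 hu.ne'), ← Complex.ofReal_log hu.le,
        mul_left_comm, ← Complex.exp_add]
      congr 2
      push_cast
      ring
    simp only [e, kernelE, zero_div, sub_zero]
    change _ = Complex.im _
    rw [Complex.im_ofReal_mul, Complex.exp_ofReal_mul_I_im]
  rw [hL, him, ← norm_Gamma_one_add hν]
  have hpolar := Complex.norm_mul_exp_arg_mul_I (Complex.Gamma (1 + Complex.I * ν))
  rw [show Complex.arg (Complex.Gamma (1 + Complex.I * ν)) = gammaPhase ν from rfl] at hpolar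
  conv_lhs => rw [← hpolar]
  rw [mul_left_comm, ← Complex.exp_add, ← add_mul, ← Complex.ofReal_add]
  change Complex.im _ = _
  rw [Complex.im_ofReal_mul, Complex.exp_ofReal_mul_I_im]

theorem besselKi_asymptotics_at_zero (ν : ℝ) (hν : 0 < ν) :
    (fun x : ℝ => besselKi ν x -
        Real.sqrt (π / (ν * Real.sinh (π * ν))) *
          Real.sin (ν * Real.log (2 / x) + gammaPhase ν))
      =O[nhdsWithin 0 (Set.Ioi 0)] (fun x : ℝ => x ^ 2) := by
  have hs : 0 < Real.sinh (π * ν) := Real.sinh_pos_iff.2 (by positivity)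
  have hconst : Real.sqrt (π / (ν * Real.sinh (π * ν))) =
      1 / ν * Real.sqrt (π * ν / Real.sinh (π * ν)) := by
    rw [show π / (ν * Real.sinh (π * ν)) = (1 / ν) ^ 2 * (π * ν / Real.sinh (π * ν)) by
      field_simp, Real.sqrt_mul (by positivity), Real.sqrt_sq (by positivity)]
  refine IsBigO.of_bound (1 / ν * (2 / ν) / 4) ?_
  filter_upwards [self_mem_nhdsWithin] with x hx
  have hx : 0 < x := hx
  have ha : 0 < x ^ 2 / 4 := by positivity
  rw [besselKi_eq_sineIntegral hx hν, hconst, mul_assoc, ← sineIntegral_zero hν, ← mul_sub,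
    norm_mul, Real.norm_eq_abs, Real.norm_eq_abs, Real.norm_eq_abs,
    abs_of_pos (show 0 < 1 / ν by positivity), abs_of_pos (show 0 < x ^ 2 by positivity)]
  calc 1 / ν * |sineIntegral ν (x ^ 2 / 4) (ν * Real.log (2 / x)) -
          sineIntegral ν 0 (ν * Real.log (2 / x))|
      ≤ 1 / ν * (2 / ν * (x ^ 2 / 4)) := by
        gcongr
        exact abs_sineIntegral_sub_le ha hν _
    _ = 1 / ν * (2 / ν) / 4 * x ^ 2 := by ring
end
end

section
/- Let ν > 0. Then there exists x₀ > 0 such that the zero set Z := {x ∈ (0, x₀) : K_{iν}(x) = 0} is infinite and (card (Z ∩ [t, x₀))) / |log t| → ν/π as t → 0+. -/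
/-!
Put `x = e^{-s}`, so that `x → 0+` is `s → ∞`. Integration by parts (`mul_besselKi_eq_im`) and
differentiation under the integral sign (`hasDerivAt_besselKi_exp`) express `ν K_{iν}(e^{-s})` as
the imaginary part, and its `s`-derivative divided by `ν` as the real part, of integrals
`∫₀^∞ w(s,t) e^{iνt} dt` with `w(s,t) ≈ (e^{t-s}/2) exp(-e^{t-s}/2)`. Shifting `t = u + s` and
dominated convergence (`tendsto_waveKernel`) show that both integrals are `e^{iνs} L + o(1)`, where
`L = 2^{iν} Γ(1 + iν)` is nonzero (`amplitude_ne_zero`). With `L = R e^{iφ}` this says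
`ν K_{iν}(e^{-s}) = R sin(νs + φ) + o(1)`, and that the derivative of the left side with respect to
the phase `νs + φ` is `R cos(νs + φ) + o(1)`.

Once the errors are below `R/2`, each phase interval `[nπ - π/2, nπ + π/2)` contains exactly one
zero (`existsUnique_zero_near_sin`). The zeros are therefore spaced one per length `π/ν` in `s`, and
the number of zeros in `[t, x₀)` is `(ν/π) |log t| + O(1)` (`counting_of_zeros`).
-/


open MeasureTheory Real Filter Topology

noncomputable section

/-! ### Integrability bounds -/

lemma le_cosh_self (t : ℝ) : t ≤ cosh t := by
  rcases le_or_gt t 0 with h | h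
  · exact h.trans (cosh_pos t).le
  · exact (Real.self_le_sinh_iff.mpr h.le).trans (Real.sinh_lt_cosh t).le

lemma exp_neg_mul_cosh_le {x : ℝ} (hx : 0 < x) (t : ℝ) :
    exp (-(x * cosh t)) ≤ exp (-x * t) := by
  rw [Real.exp_le_exp]
  nlinarith [le_cosh_self t]

/-- Follows from `w e^{-w} ≤ 2 e^{-w/2}` with `w = x cosh t`. The bound is uniform in `x ≥ y`, as
differentiation under the integral sign requires. -/
lemma mul_cosh_mul_exp_le {x y : ℝ} (hy : 0 < y) (hxy : y ≤ x) {t : ℝ} (ht : 0 < t) :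
    x * cosh t * exp (-(x * cosh t)) ≤ 2 * exp (-(y / 2) * t) := by
  have h1 := Real.add_one_le_exp (x * cosh t / 2)
  have h2 : exp (-(x * cosh t)) = exp (-(x * cosh t / 2)) * exp (-(x * cosh t / 2)) := by
    rw [← Real.exp_add]; congr 1; ring
  have h3 : exp (x * cosh t / 2) * exp (-(x * cosh t / 2)) = 1 := by
    rw [← Real.exp_add]; simp
  have h4 : exp (-(x * cosh t / 2)) ≤ exp (-(y / 2) * t) := by
    rw [Real.exp_le_exp]
    have := mul_le_mul hxy (le_cosh_self t) ht.le (hy.le.trans hxy)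
    linarith
  have h5 := Real.exp_pos (-(x * cosh t / 2))
  rw [h2]
  nlinarith

lemma integrableOn_exp_neg_mul_cosh {x : ℝ} (hx : 0 < x) :
    IntegrableOn (fun t => exp (-(x * cosh t))) (Set.Ioi 0) := by
  refine Integrable.mono' (exp_neg_integrableOn_Ioi 0 hx) (by fun_prop) ?_
  refine Eventually.of_forall fun t => ?_
  rw [Real.norm_eq_abs, abs_of_pos (exp_pos _)]
  exact exp_neg_mul_cosh_le hx t

lemma integrableOn_mul_cosh_mul_exp {x : ℝ} (hx : 0 < x) :
    IntegrableOn (fun t => x * cosh t * exp (-(x * cosh t))) (Set.Ioi 0) := by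
  refine Integrable.mono' ((exp_neg_integrableOn_Ioi 0 (half_pos hx)).const_mul 2)
    (by fun_prop) ?_
  refine (ae_restrict_iff' measurableSet_Ioi).mpr (Eventually.of_forall fun t ht => ?_)
  rw [Real.norm_eq_abs, abs_of_pos (by have := cosh_pos t; positivity)]
  exact mul_cosh_mul_exp_le hx le_rfl ht

/-! ### Asymptotics of the oscillatory integrals -/

/-- The integrand `w(s,t) e^{iνt}`, where `w(s,t) = x (e^t + ε e^{-t})/2 · e^{-x cosh t}` and
`x = e^{-s}`. For `ε = 1` its real part gives the `s`-derivative of `K_{iν}(e^{-s})`; for `ε = -1`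
its imaginary part gives `ν K_{iν}(e^{-s})`. -/
def waveKernel (ν ε s t : ℝ) : ℂ :=
  ((exp (-s) * ((exp t + ε * exp (-t)) / 2) * exp (-(exp (-s) * cosh t)) : ℝ) : ℂ) *
    Complex.exp ((ν * t : ℝ) * Complex.I)

lemma abs_weight_le {ε : ℝ} (hε : |ε| ≤ 1) (t : ℝ) :
    |(exp t + ε * exp (-t)) / 2| ≤ cosh t := by
  have h := abs_le.mp hε
  rw [cosh_eq, abs_le]
  have h1 := exp_pos t
  have h2 := exp_pos (-t)
  constructor <;> nlinarith

lemma continuous_waveKernel (ν ε s : ℝ) : Continuous (waveKernel ν ε s) := by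
  unfold waveKernel
  fun_prop

lemma integrableOn_waveKernel (ν : ℝ) {ε : ℝ} (hε : |ε| ≤ 1) (s : ℝ) :
    IntegrableOn (waveKernel ν ε s) (Set.Ioi 0) := by
  refine Integrable.mono' (integrableOn_mul_cosh_mul_exp (exp_pos (-s)))
    (continuous_waveKernel ν ε s).aestronglyMeasurable (Eventually.of_forall fun t => ?_)
  rw [waveKernel, norm_mul, Complex.norm_exp_ofReal_mul_I, mul_one, Complex.norm_real,
    Real.norm_eq_abs, abs_mul, abs_mul, abs_of_pos (exp_pos _), abs_of_pos (exp_pos _)]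
  gcongr
  exact abs_weight_le hε t

/-- The limit of `e^{-iνs} ∫₀^∞ w(s,t) e^{iνt} dt` as `s → ∞`; it equals `2^{iν} Γ(1 + iν)`. -/
def amplitude (ν : ℝ) : ℂ :=
  ∫ u : ℝ, ((exp u / 2 * exp (-(exp u / 2)) : ℝ) : ℂ) * Complex.exp ((ν * u : ℝ) * Complex.I)

lemma exp_image_univ : Real.exp '' Set.univ = Set.Ioi 0 := by
  rw [Set.image_univ, Real.range_exp]

/-- Substituting `y = e^u` turns the integral into a nonzero multiple of `Γ(1 + iν)`. -/
lemma amplitude_ne_zero (ν : ℝ) : amplitude ν ≠ 0 := by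
  have hre : 0 < (1 + ν * Complex.I : ℂ).re := by simp
  have h1 := Complex.integral_cpow_mul_exp_neg_mul_Ioi hre (r := 1 / 2) (by norm_num)
  rw [← exp_image_univ, integral_image_eq_integral_abs_deriv_smul MeasurableSet.univ
    (fun x _ => (Real.hasDerivAt_exp x).hasDerivWithinAt) Real.exp_injective.injOn,
    Measure.restrict_univ] at h1
  have h2 : amplitude ν = 1 / 2 * ((1 / ((1 / 2 : ℝ) : ℂ)) ^ (1 + ν * Complex.I : ℂ) *
      Complex.Gamma (1 + ν * Complex.I)) := by
    rw [← h1, ← integral_const_mul, amplitude]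
    congr 1
    ext u
    have h3 : ((exp u : ℝ) : ℂ) ^ (1 + ν * Complex.I - 1 : ℂ)
        = Complex.exp ((ν * u : ℝ) * Complex.I) := by
      rw [Complex.cpow_def_of_ne_zero (by exact_mod_cast (exp_pos u).ne'),
        ← Complex.ofReal_log (exp_pos u).le, Real.log_exp]
      congr 1
      push_cast
      ring
    rw [h3, abs_of_pos (exp_pos u), Complex.real_smul]
    push_cast
    ring_nf
  rw [h2]
  refine mul_ne_zero (by norm_num) (mul_ne_zero ?_ (Complex.Gamma_ne_zero_of_re_pos hre))
  rw [Complex.cpow_def_of_ne_zero (by norm_num)]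
  exact Complex.exp_ne_zero _

lemma integrable_exp_mul_exp_neg : Integrable (fun u : ℝ => exp u * exp (-(exp u / 2))) := by
  have h := exp_neg_integrableOn_Ioi 0 (b := 1 / 2) (by norm_num)
  rw [← exp_image_univ, integrableOn_image_iff_integrableOn_abs_deriv_smul MeasurableSet.univ
    (fun x _ => (Real.hasDerivAt_exp x).hasDerivWithinAt) Real.exp_injective.injOn,
    integrableOn_univ] at h
  refine h.congr (Eventually.of_forall fun u => ?_)
  simp only [abs_of_pos (exp_pos u), smul_eq_mul]
  ring_nf

/-- After the shift `t = u + s` the integrand converges pointwise to that of `amplitude ν` and is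
dominated by `e^u e^{-e^u/2}`. The limit does not depend on `ε`, whose term carries `e^{-2s}`. -/
lemma tendsto_waveKernel (ν : ℝ) {ε : ℝ} (hε : |ε| ≤ 1) :
    Tendsto (fun s : ℝ => Complex.exp (-((ν * s : ℝ) * Complex.I)) *
      ∫ t in Set.Ioi (0 : ℝ), waveKernel ν ε s t) atTop (𝓝 (amplitude ν)) := by
  -- the shifted integrand, extended by zero to the whole line
  set F : ℝ → ℝ → ℂ := fun s u => (Set.Ioi (-s)).indicator (fun u =>
    (((exp u + ε * exp (-2 * s - u)) / 2 * exp (-((exp u + exp (-2 * s - u)) / 2)) : ℝ) : ℂ) *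
    Complex.exp ((ν * u : ℝ) * Complex.I)) u with hF
  have hshift : ∀ s : ℝ, Complex.exp (-((ν * s : ℝ) * Complex.I)) *
      ∫ t in Set.Ioi (0 : ℝ), waveKernel ν ε s t = ∫ u, F s u := by
    intro s
    rw [← integral_const_mul, ← integral_indicator measurableSet_Ioi,
      ← integral_add_right_eq_self _ s]
    congr 1
    ext u
    by_cases hu : -s < u
    · rw [hF, Set.indicator_of_mem (show u + s ∈ Set.Ioi (0 : ℝ) by simp; linarith)]
      simp only
      rw [Set.indicator_of_mem (show u ∈ Set.Ioi (-s) from hu), waveKernel]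
      have e1 : exp (-s) * ((exp (u + s) + ε * exp (-(u + s))) / 2)
          = (exp u + ε * exp (-2 * s - u)) / 2 := by
        have a1 : exp u = exp (-s) * exp (u + s) := by rw [← Real.exp_add]; congr 1; ring
        have a2 : exp (-2 * s - u) = exp (-s) * exp (-(u + s)) := by
          rw [← Real.exp_add]; congr 1; ring
        rw [a1, a2]; ring
      have e2 : exp (-s) * cosh (u + s) = (exp u + exp (-2 * s - u)) / 2 := by
        have a1 : exp u = exp (-s) * exp (u + s) := by rw [← Real.exp_add]; congr 1; ring
        have a2 : exp (-2 * s - u) = exp (-s) * exp (-(u + s)) := by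
          rw [← Real.exp_add]; congr 1; ring
        rw [a1, a2, cosh_eq]; ring
      have e3 : Complex.exp (-((ν * s : ℝ) * Complex.I)) *
          Complex.exp ((ν * (u + s) : ℝ) * Complex.I) = Complex.exp ((ν * u : ℝ) * Complex.I) := by
        rw [← Complex.exp_add]; congr 1; push_cast; ring
      rw [e1, e2, ← e3]
      ring
    · rw [hF, Set.indicator_of_notMem (show u + s ∉ Set.Ioi (0 : ℝ) by simp; linarith)]
      simp only
      rw [Set.indicator_of_notMem (show u ∉ Set.Ioi (-s) from hu)]
  simp_rw [hshift]
  refine tendsto_integral_filter_of_dominated_convergence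
    (fun u : ℝ => exp u * exp (-(exp u / 2))) ?_ ?_ integrable_exp_mul_exp_neg ?_
  · refine Eventually.of_forall fun s => ?_
    refine AEStronglyMeasurable.indicator ?_ measurableSet_Ioi
    exact (by fun_prop : Continuous _).aestronglyMeasurable
  · refine Eventually.of_forall fun s => Eventually.of_forall fun u => ?_
    simp only [hF]
    by_cases hu : u ∈ Set.Ioi (-s)
    · rw [Set.indicator_of_mem hu, norm_mul, Complex.norm_exp_ofReal_mul_I, mul_one,
        Complex.norm_real, Real.norm_eq_abs, abs_mul, abs_of_pos (exp_pos (-_))]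
      have h1 : exp (-2 * s - u) ≤ exp u := by
        rw [Real.exp_le_exp]; linarith [Set.mem_Ioi.mp hu]
      have h2 := exp_pos (-2 * s - u)
      have h3 := abs_le.mp hε
      gcongr
      · rw [abs_le]
        constructor <;> nlinarith
      · linarith
    · rw [Set.indicator_of_notMem hu, norm_zero]
      positivity
  · refine Eventually.of_forall fun u => ?_
    have h0 : Tendsto (fun s : ℝ => exp (-2 * s - u)) atTop (𝓝 0) := by
      refine Real.tendsto_exp_atBot.comp ?_
      refine tendsto_atBot_add_const_right _ (-u) ?_
      exact tendsto_id.const_mul_atTop_of_neg (by norm_num)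
    have h1 : Tendsto (fun s : ℝ =>
        (((exp u + ε * exp (-2 * s - u)) / 2 * exp (-((exp u + exp (-2 * s - u)) / 2)) : ℝ) : ℂ) *
        Complex.exp ((ν * u : ℝ) * Complex.I)) atTop
        (𝓝 (((exp u / 2 * exp (-(exp u / 2)) : ℝ) : ℂ) *
          Complex.exp ((ν * u : ℝ) * Complex.I))) := by
      refine Tendsto.mul_const _ ((Complex.continuous_ofReal.tendsto _).comp ?_)
      have h2 : Continuous fun r : ℝ => (exp u + ε * r) / 2 * exp (-((exp u + r) / 2)) := by
        fun_prop
      have h3 := (h2.tendsto 0).comp h0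
      simpa [Function.comp_def] using h3
    refine h1.congr' ?_
    filter_upwards [eventually_gt_atTop (-u)] with s hs
    simp only [hF]
    rw [Set.indicator_of_mem (show u ∈ Set.Ioi (-s) by simp; linarith)]

/-! ### `K_{iν}` and its derivative in the variable `s = -log x` -/

/-- Integration by parts in `t`. -/
lemma mul_besselKi_eq_im (ν s : ℝ) :
    ν * besselKi ν (exp (-s)) = (∫ t in Set.Ioi (0 : ℝ), waveKernel ν (-1) s t).im := by
  have him : (∫ t in Set.Ioi (0 : ℝ), waveKernel ν (-1) s t).im =
      ∫ t in Set.Ioi (0 : ℝ), (waveKernel ν (-1) s t).im :=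
    (integral_im (𝕜 := ℂ) (integrableOn_waveKernel ν (ε := -1) (by simp) s)).symm
  have hx := exp_pos (-s)
  have hint1 : IntegrableOn (fun t => ν * (exp (-(exp (-s) * cosh t)) * cos (ν * t)))
      (Set.Ioi 0) := by
    refine Integrable.const_mul ?_ _
    refine Integrable.mono' (integrableOn_exp_neg_mul_cosh hx) (by fun_prop) ?_
    refine Eventually.of_forall fun t => ?_
    rw [norm_mul, Real.norm_eq_abs, abs_of_pos (exp_pos _)]
    exact mul_le_of_le_one_right (exp_pos _).le (abs_cos_le_one _)
  have hint2 : IntegrableOn (fun t => (waveKernel ν (-1) s t).im) (Set.Ioi 0) :=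
    (integrableOn_waveKernel ν (ε := -1) (by simp) s).im
  -- the antiderivative `e^{-x cosh t} sin (νt)` vanishes at both ends of `(0, ∞)`
  have hmain : ∫ t in Set.Ioi (0 : ℝ), (ν * (exp (-(exp (-s) * cosh t)) * cos (ν * t))
      - (waveKernel ν (-1) s t).im) = 0 - exp (-(exp (-s) * cosh 0)) * sin (ν * 0) := by
    refine integral_Ioi_of_hasDerivAt_of_tendsto'
      (f := fun t => exp (-(exp (-s) * cosh t)) * sin (ν * t)) (fun t _ => ?_)
      (hint1.sub hint2) ?_
    · have h1 : HasDerivAt (fun t => exp (-(exp (-s) * cosh t)))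
          (exp (-(exp (-s) * cosh t)) * -(exp (-s) * sinh t)) t :=
        ((Real.hasDerivAt_cosh t).const_mul _).neg.exp
      have h2 : HasDerivAt (fun t => sin (ν * t)) (cos (ν * t) * (ν * 1)) t :=
        ((hasDerivAt_id t).const_mul ν).sin
      refine (h1.mul h2).congr_deriv ?_
      rw [waveKernel, Complex.im_ofReal_mul, Complex.exp_ofReal_mul_I_im, sinh_eq]
      ring
    · have hz : Tendsto (fun t : ℝ => exp (-exp (-s) * t)) atTop (𝓝 0) :=
        Real.tendsto_exp_atBot.comp (tendsto_id.const_mul_atTop_of_neg (neg_neg_of_pos hx))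
      refine squeeze_zero_norm (fun t => ?_) hz
      rw [norm_mul, Real.norm_eq_abs, abs_of_pos (exp_pos _)]
      exact (mul_le_of_le_one_right (exp_pos _).le (abs_sin_le_one _)).trans
        (exp_neg_mul_cosh_le hx t)
  rw [integral_sub hint1 hint2, integral_const_mul] at hmain
  rw [him, besselKi]
  simp only [mul_zero, sin_zero, sub_zero] at hmain
  linarith

/-- Differentiation under the integral sign, in the variable `s = -log x`. -/
lemma hasDerivAt_besselKi_exp (ν s : ℝ) :
    HasDerivAt (fun s => besselKi ν (exp (-s)))
      (∫ t in Set.Ioi (0 : ℝ), waveKernel ν 1 s t).re s := by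
  have hre : (∫ t in Set.Ioi (0 : ℝ), waveKernel ν 1 s t).re =
      ∫ t in Set.Ioi (0 : ℝ), exp (-s) * cosh t * exp (-(exp (-s) * cosh t)) * cos (ν * t) := by
    refine (integral_re (𝕜 := ℂ) (integrableOn_waveKernel ν (ε := 1) (by simp) s)).symm.trans ?_
    congr 1
    ext t
    change (waveKernel ν 1 s t).re = _
    rw [waveKernel, Complex.re_ofReal_mul, Complex.exp_ofReal_mul_I_re, one_mul, ← cosh_eq]
  rw [hre]
  have hx := exp_pos (-s)
  refine (hasDerivAt_integral_of_dominated_loc_of_deriv_le (s := Set.Iio (s + 1))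
    (μ := volume.restrict (Set.Ioi (0 : ℝ)))
    (F := fun s t => exp (-(exp (-s) * cosh t)) * cos (ν * t))
    (F' := fun s t => exp (-s) * cosh t * exp (-(exp (-s) * cosh t)) * cos (ν * t))
    (bound := fun t => 2 * exp (-(exp (-(s + 1)) / 2) * t))
    (Iio_mem_nhds (by linarith)) ?_ ?_ ?_ ?_ ?_ ?_).2
  · exact Eventually.of_forall fun s => (by fun_prop : Continuous _).aestronglyMeasurable
  · refine Integrable.mono' (integrableOn_exp_neg_mul_cosh hx) (by fun_prop) ?_
    refine Eventually.of_forall fun t => ?_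
    rw [norm_mul, Real.norm_eq_abs, abs_of_pos (exp_pos _)]
    exact mul_le_of_le_one_right (exp_pos _).le (abs_cos_le_one _)
  · exact (by fun_prop : Continuous _).aestronglyMeasurable
  · refine (ae_restrict_iff' measurableSet_Ioi).mpr (Eventually.of_forall fun t ht r hr => ?_)
    have hpos : 0 < exp (-r) * cosh t * exp (-(exp (-r) * cosh t)) := by
      have := cosh_pos t
      positivity
    rw [norm_mul, Real.norm_eq_abs, abs_of_pos hpos]
    refine (mul_le_of_le_one_right hpos.le (abs_cos_le_one _)).trans ?_
    refine mul_cosh_mul_exp_le (exp_pos _) ?_ ht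
    rw [Real.exp_le_exp]
    linarith [Set.mem_Iio.mp hr]
  · exact (exp_neg_integrableOn_Ioi 0 (half_pos (exp_pos _))).const_mul 2
  · refine Eventually.of_forall fun t r _ => ?_
    have h1 : HasDerivAt (fun r : ℝ => exp (-r)) (exp (-r) * -1) r := (hasDerivAt_neg r).exp
    refine (((h1.mul_const (cosh t)).neg.exp).mul_const (cos (ν * t))).congr_deriv ?_
    simp only [Pi.neg_apply]
    ring

lemma eventually_norm_waveKernel_sub_lt (ν : ℝ) {ε : ℝ} (hε : |ε| ≤ 1) :
    ∀ᶠ s : ℝ in atTop, ‖(∫ t in Set.Ioi (0 : ℝ), waveKernel ν ε s t) -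
      ‖amplitude ν‖ * Complex.exp ((ν * s + (amplitude ν).arg : ℝ) * Complex.I)‖
        < ‖amplitude ν‖ * (1 / 2) := by
  have hR : 0 < ‖amplitude ν‖ := norm_pos_iff.mpr (amplitude_ne_zero ν)
  have h := (tendsto_waveKernel ν hε).eventually (Metric.ball_mem_nhds _
    (by positivity : 0 < ‖amplitude ν‖ * (1 / 2)))
  filter_upwards [h] with s hs
  rw [dist_eq_norm] at hs
  have hL := Complex.norm_mul_exp_arg_mul_I (amplitude ν)
  set W := ∫ t in Set.Ioi (0 : ℝ), waveKernel ν ε s t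
  have e1 : W - ‖amplitude ν‖ * Complex.exp ((ν * s + (amplitude ν).arg : ℝ) * Complex.I) =
      Complex.exp ((ν * s : ℝ) * Complex.I) *
        (Complex.exp (-((ν * s : ℝ) * Complex.I)) * W - amplitude ν) := by
    have e2 : Complex.exp ((ν * s + (amplitude ν).arg : ℝ) * Complex.I) =
        Complex.exp ((ν * s : ℝ) * Complex.I) * Complex.exp ((amplitude ν).arg * Complex.I) := by
      rw [← Complex.exp_add]; congr 1; push_cast; ring
    rw [mul_sub, ← mul_assoc, ← Complex.exp_add, add_neg_cancel, Complex.exp_zero, one_mul, e2]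
    linear_combination (-Complex.exp ((ν * s : ℝ) * Complex.I)) * hL
  rw [e1, norm_mul, Complex.norm_exp_ofReal_mul_I, one_mul]
  exact hs

/-! ### Counting zeros -/

/-- If `Z ⊆ (0, x₀)` has exactly one point `z k` in each logarithmic cell
`k ≤ (log x₀ - log x) / p < k + 1`, then `Z ∩ [t, x₀)` has `(log x₀ - log t) / p + O(1)` points. -/
lemma counting_of_zeros (Z : Set ℝ) (x₀ p : ℝ) (hx₀ : 0 < x₀) (hp : 0 < p) (z : ℕ → ℝ)
    (hZ : Z ⊆ Set.Ioo 0 x₀) (hz : ∀ k, z k ∈ Z)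
    (hfl : ∀ k, ⌊(log x₀ - log (z k)) / p⌋₊ = k)
    (huniq : ∀ x ∈ Z, z ⌊(log x₀ - log x) / p⌋₊ = x) :
    Z.Infinite ∧ Tendsto (fun t : ℝ => ((Z ∩ Set.Ico t x₀).ncard : ℝ) / |log t|)
      (𝓝[>] 0) (𝓝 (1 / p)) := by
  have hinj : Function.Injective z := by
    intro a b hab
    rw [← hfl a, ← hfl b, hab]
  refine ⟨Set.infinite_of_injective_forall_mem hinj hz, ?_⟩
  have hmono : ∀ a b : ℝ, 0 < a → a ≤ b →
      ⌊(log x₀ - log b) / p⌋₊ ≤ ⌊(log x₀ - log a) / p⌋₊ := by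
    intro a b ha hab
    have := Real.log_le_log ha hab
    gcongr
  have hub : ∀ t : ℝ, 0 < t → (Z ∩ Set.Ico t x₀) ⊆ z '' Set.Iic ⌊(log x₀ - log t) / p⌋₊ := by
    rintro t ht x ⟨hxZ, hxt⟩
    exact ⟨_, hmono t x ht hxt.1, huniq x hxZ⟩
  have hlb : ∀ t : ℝ, 0 < t → z '' Set.Iio ⌊(log x₀ - log t) / p⌋₊ ⊆ (Z ∩ Set.Ico t x₀) := by
    rintro t ht _ ⟨k, hk, rfl⟩
    have hk0 := hZ (hz k)
    refine ⟨hz k, ?_, hk0.2⟩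
    by_contra! hlt
    have := hmono _ _ hk0.1 hlt.le
    rw [hfl] at this
    exact absurd hk (not_lt.mpr this)
  have hcub : ∀ t : ℝ, 0 < t →
      (Z ∩ Set.Ico t x₀).ncard ≤ ⌊(log x₀ - log t) / p⌋₊ + 1 := by
    intro t ht
    refine (Set.ncard_le_ncard (hub t ht) ((Set.finite_Iic _).image _)).trans ?_
    rw [Set.ncard_image_of_injective _ hinj]
    simp [Set.ncard_eq_toFinset_card']
  have hclb : ∀ t : ℝ, 0 < t →
      ⌊(log x₀ - log t) / p⌋₊ ≤ (Z ∩ Set.Ico t x₀).ncard := by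
    intro t ht
    have := Set.ncard_le_ncard (hlb t ht) (((Set.finite_Iic _).image _).subset (hub t ht))
    rw [Set.ncard_image_of_injective _ hinj] at this
    simpa [Set.ncard_eq_toFinset_card'] using this
  have hlog : Tendsto (fun t : ℝ => -log t) (𝓝[>] 0) atTop :=
    tendsto_neg_atBot_atTop.comp Real.tendsto_log_nhdsGT_zero
  have hlim : ∀ c : ℝ, Tendsto (fun t : ℝ => 1 / p + c * (-log t)⁻¹) (𝓝[>] 0) (𝓝 (1 / p)) := by
    intro c
    simpa using ((tendsto_inv_atTop_zero.comp hlog).const_mul c).const_add (1 / p)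
  have hev : ∀ᶠ t : ℝ in 𝓝[>] 0, 0 < t ∧ 0 < -log t ∧ t < x₀ := by
    filter_upwards [self_mem_nhdsWithin, hlog.eventually_gt_atTop 0,
      nhdsWithin_le_nhds (Iio_mem_nhds hx₀)] with t h1 h2 h3
    exact ⟨h1, h2, h3⟩
  refine tendsto_of_tendsto_of_tendsto_of_le_of_le' (hlim (log x₀ / p - 1))
    (hlim (log x₀ / p + 1)) ?_ ?_
  · filter_upwards [hev] with t ⟨h1, h2, h3⟩
    have hc : (⌊(log x₀ - log t) / p⌋₊ : ℝ) ≤ (Z ∩ Set.Ico t x₀).ncard := by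
      exact_mod_cast hclb t h1
    have hf := Nat.lt_floor_add_one ((log x₀ - log t) / p)
    rw [abs_of_neg (by linarith), le_div_iff₀ h2]
    have : (1 / p + (log x₀ / p - 1) * (-log t)⁻¹) * -log t = (log x₀ - log t) / p - 1 := by
      have : log t ≠ 0 := by linarith
      field_simp
      ring
    linarith
  · filter_upwards [hev] with t ⟨h1, h2, h3⟩
    have hc : ((Z ∩ Set.Ico t x₀).ncard : ℝ) ≤ (⌊(log x₀ - log t) / p⌋₊ : ℝ) + 1 := by
      exact_mod_cast hcub t h1
    have hpos : 0 ≤ (log x₀ - log t) / p :=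
      div_nonneg (sub_nonneg.mpr (Real.log_le_log h1 h3.le)) hp.le
    have hf := Nat.floor_le hpos
    rw [abs_of_neg (by linarith), div_le_iff₀ h2]
    have : (1 / p + (log x₀ / p + 1) * (-log t)⁻¹) * -log t = (log x₀ - log t) / p + 1 := by
      have : log t ≠ 0 := by linarith
      field_simp
      ring
    linarith

/-- A function which is `C⁰`- and `C¹`-close to `sin` has exactly one zero in `[-π/2, π/2)`: a sign
change produces it, and Rolle's theorem excludes a second one. -/
lemma existsUnique_zero_near_sin (h h' : ℝ → ℝ) (hd : ∀ τ, HasDerivAt h (h' τ) τ)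
    (h0 : ∀ τ, -(π / 2) ≤ τ → |h τ - sin τ| < 1 / 2)
    (h1 : ∀ τ, -(π / 2) ≤ τ → |h' τ - cos τ| < 1 / 2) :
    ∃ τ, (-(π / 2) < τ ∧ τ < π / 2 ∧ h τ = 0) ∧
      ∀ τ', -(π / 2) ≤ τ' → τ' < π / 2 → h τ' = 0 → τ' = τ := by
  have hpi := Real.pi_pos
  have hL : h (-(π / 2)) < 0 := by
    have := abs_lt.mp (h0 (-(π / 2)) le_rfl)
    rw [Real.sin_neg, Real.sin_pi_div_two] at this
    linarith
  have hR : 0 < h (π / 2) := by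
    have := abs_lt.mp (h0 (π / 2) (by linarith))
    rw [Real.sin_pi_div_two] at this
    linarith
  have hc : Continuous h := continuous_iff_continuousAt.mpr fun τ => (hd τ).continuousAt
  obtain ⟨τ, hτ, hτ0⟩ := intermediate_value_Ioo (by linarith : -(π / 2) ≤ π / 2)
    hc.continuousOn (show (0 : ℝ) ∈ Set.Ioo _ _ from ⟨hL, hR⟩)
  -- every zero satisfies `|sin| < 1/2`, hence lies within `π/6` of the origin
  have hloc : ∀ a, -(π / 2) ≤ a → a < π / 2 → h a = 0 → -(π / 6) < a ∧ a < π / 6 := by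
    intro a ha1 ha2 ha0
    have := abs_lt.mp (h0 a ha1)
    rw [ha0] at this
    constructor
    · by_contra! hle
      have := Real.sin_le_sin_of_le_of_le_pi_div_two ha1 (by linarith) hle
      rw [Real.sin_neg, Real.sin_pi_div_six] at this
      linarith
    · by_contra! hle
      have := Real.sin_le_sin_of_le_of_le_pi_div_two (by linarith) ha2.le hle
      rw [Real.sin_pi_div_six] at this
      linarith
  have hno : ∀ a b, -(π / 2) ≤ a → b < π / 2 → h a = 0 → h b = 0 → ¬ a < b := by
    intro a b ha hb ha0 hb0 hab
    obtain ⟨c, hc1, hc2⟩ := exists_hasDerivAt_eq_zero hab hc.continuousOn (ha0.trans hb0.symm)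
      (fun x _ => hd x)
    have h2 := hloc a ha (by linarith) ha0
    have h3 := hloc b (by linarith) hb hb0
    have hcos : cos (π / 3) ≤ cos c := by
      rw [← Real.cos_abs c]
      refine Real.cos_le_cos_of_nonneg_of_le_pi (abs_nonneg _) (by linarith) ?_
      rw [abs_le]
      constructor <;> linarith [hc1.1, hc1.2]
    rw [Real.cos_pi_div_three] at hcos
    have := abs_lt.mp (h1 c (by linarith [hc1.1]))
    rw [hc2] at this
    linarith
  refine ⟨τ, ⟨hτ.1, hτ.2, hτ0⟩, fun τ' h2 h3 h4 => ?_⟩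
  exact le_antisymm (not_lt.mp (hno τ τ' hτ.1.le h3 hτ0 h4)) (not_lt.mp (hno τ' τ h2 hτ.2 h4 hτ0))

theorem besselKi_zero_counting (ν : ℝ) (hν : 0 < ν) :
    ∃ x₀ > (0 : ℝ),
      {x ∈ Set.Ioo 0 x₀ | besselKi ν x = 0}.Infinite ∧
      Tendsto (fun t : ℝ =>
          (({x ∈ Set.Ioo 0 x₀ | besselKi ν x = 0} ∩ Set.Ico t x₀).ncard : ℝ) / |Real.log t|)
        (nhdsWithin 0 (Set.Ioi 0)) (nhds (ν / π)) := by
  have hpi := Real.pi_pos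
  have hR : 0 < ‖amplitude ν‖ := norm_pos_iff.mpr (amplitude_ne_zero ν)
  obtain ⟨S, hS⟩ := eventually_atTop.mp ((eventually_norm_waveKernel_sub_lt ν (ε := -1)
    (by simp)).and (eventually_norm_waveKernel_sub_lt ν (ε := 1) (by simp)))
  set R := ‖amplitude ν‖ with hRdef
  set φ := (amplitude ν).arg with hφ
  -- `x₀` will correspond to the phase `νs + φ = Mπ - π/2`, with `M` large enough that `s ≥ S`
  obtain ⟨M, hM⟩ := exists_nat_ge ((ν * S + φ + π / 2) / π)
  rw [div_le_iff₀ hpi] at hM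
  have hzero : ∀ k : ℕ, ∃ τ, (-(π / 2) < τ ∧ τ < π / 2 ∧
      besselKi ν (exp (-(((M + k : ℕ) * π + τ - φ) / ν))) = 0) ∧
      ∀ τ', -(π / 2) ≤ τ' → τ' < π / 2 →
        besselKi ν (exp (-(((M + k : ℕ) * π + τ' - φ) / ν))) = 0 → τ' = τ := by
    intro k
    set n := M + k with hn
    have hS' : ∀ τ, -(π / 2) ≤ τ → S ≤ (n * π + τ - φ) / ν := by
      intro τ hτ
      rw [le_div_iff₀ hν, hn]
      push_cast
      have : 0 ≤ (k : ℝ) * π := by positivity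
      linarith
    have hphase : ∀ τ, ν * ((n * π + τ - φ) / ν) + φ = τ + n * π := by
      intro τ
      field_simp
      ring
    have hsq : ((-1 : ℝ) ^ n) * (-1) ^ n = 1 := by
      rw [← mul_pow]; simp
    have habs : |((-1 : ℝ) ^ n)| = 1 := by simp
    have hscale : ∀ y z : ℝ, |y - R * ((-1) ^ n * z)| < R * (1 / 2) →
        |(-1) ^ n / R * y - z| < 1 / 2 := by
      intro y z hyz
      have e : (-1) ^ n / R * y - z = (-1) ^ n / R * (y - R * ((-1) ^ n * z)) := by
        have : (-1) ^ n / R * (R * ((-1) ^ n * z)) = ((-1) ^ n * (-1) ^ n) * z := by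
          field_simp
        rw [mul_sub, this, hsq, one_mul]
      rw [e, abs_mul, abs_div, habs, abs_of_pos hR, one_div, inv_mul_lt_iff₀ hR]
      exact hyz
    -- normalised by `(-1)^n ν / R`, the function is close to `sin τ` on the `n`-th half-period
    have key := existsUnique_zero_near_sin
      (fun τ => (-1) ^ n / R * (ν * besselKi ν (exp (-((n * π + τ - φ) / ν)))))
      (fun τ => (-1) ^ n / R *
        (∫ t in Set.Ioi (0 : ℝ), waveKernel ν 1 ((n * π + τ - φ) / ν) t).re) ?_ ?_ ?_
    · obtain ⟨τ, ⟨h1, h2, h3⟩, h4⟩ := key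
      have hne : (-1 : ℝ) ^ n / R ≠ 0 := div_ne_zero (by simp) hR.ne'
      refine ⟨τ, ⟨h1, h2, ?_⟩, fun τ' h5 h6 h7 => h4 τ' h5 h6 (by simp [h7])⟩
      simpa [hne, hν.ne', hR.ne'] using h3
    · intro τ
      have h1 : HasDerivAt (fun τ : ℝ => (n * π + τ - φ) / ν) (1 / ν) τ :=
        (((hasDerivAt_id τ).const_add _).sub_const _).div_const _
      refine ((((hasDerivAt_besselKi_exp ν _).comp τ h1).const_mul ν).const_mul _).congr_deriv ?_
      field_simp
    · intro τ hτ
      refine hscale _ _ ?_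
      have h1 := (hS _ (hS' τ hτ)).1
      rw [hphase] at h1
      refine lt_of_le_of_lt ?_ h1
      refine le_trans (le_of_eq ?_) (Complex.abs_im_le_norm _)
      rw [Complex.sub_im, ← mul_besselKi_eq_im, Complex.im_ofReal_mul,
        Complex.exp_ofReal_mul_I_im, Real.sin_add_nat_mul_pi]
    · intro τ hτ
      refine hscale _ _ ?_
      have h1 := (hS _ (hS' τ hτ)).2
      rw [hphase] at h1
      refine lt_of_le_of_lt ?_ h1
      refine le_trans (le_of_eq ?_) (Complex.abs_re_le_norm _)
      rw [Complex.sub_re, Complex.re_ofReal_mul,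
        Complex.exp_ofReal_mul_I_re, Real.cos_add_nat_mul_pi]
  choose τ hτ hτu using hzero
  refine ⟨exp (-((M * π - π / 2 - φ) / ν)), exp_pos _, ?_⟩
  have hp : ν / π = 1 / (π / ν) := by field_simp
  rw [hp]
  refine counting_of_zeros _ _ (π / ν) (exp_pos _) (by positivity)
    (fun k => exp (-(((M + k : ℕ) * π + τ k - φ) / ν))) (fun x hx => hx.1) ?_ ?_ ?_
  · intro k
    refine ⟨⟨exp_pos _, ?_⟩, (hτ k).2.2⟩
    rw [Real.exp_lt_exp, neg_lt_neg_iff, div_lt_div_iff_of_pos_right hν]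
    push_cast
    have : 0 ≤ (k : ℝ) * π := by positivity
    linarith [(hτ k).1]
  · intro k
    rw [Real.log_exp, Real.log_exp]
    have e : (-((M * π - π / 2 - φ) / ν) - -(((M + k : ℕ) * π + τ k - φ) / ν)) / (π / ν)
        = (k * π + (τ k + π / 2)) / π := by
      push_cast
      field_simp
      ring
    have h1 := hτ k
    have hk : 0 ≤ (k : ℝ) * π := by positivity
    rw [e, Nat.floor_eq_iff (div_nonneg (by linarith [h1.1]) hpi.le), le_div_iff₀ hpi,
      div_lt_iff₀ hpi]
    constructor <;> linarith [h1.1, h1.2.1]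
  · rintro x ⟨⟨hx0, hx1⟩, hx⟩
    rw [Real.log_exp]
    have hlog : log x < -((M * π - π / 2 - φ) / ν) := by
      rw [← Real.log_exp (-((M * π - π / 2 - φ) / ν))]
      exact Real.log_lt_log hx0 hx1
    set q := (-((M * π - π / 2 - φ) / ν) - log x) / (π / ν) with hq
    have hqpos : 0 ≤ q := div_nonneg (by linarith) (by positivity)
    have hf1 := Nat.floor_le hqpos
    have hf2 := Nat.lt_floor_add_one q
    set k := ⌊q⌋₊
    have hqe : q * π = -ν * log x - M * π + π / 2 + φ := by
      rw [hq]
      field_simp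
      ring
    have hxe : exp (-(((M + k : ℕ) * π + (-ν * log x + φ - (M + k : ℕ) * π) - φ) / ν)) = x := by
      have : -(((M + k : ℕ) * π + (-ν * log x + φ - (M + k : ℕ) * π) - φ) / ν) = log x := by
        field_simp
        ring
      rw [this, Real.exp_log hx0]
    have hu := hτu k (-ν * log x + φ - (M + k : ℕ) * π) ?_ ?_ (by rw [hxe]; exact hx)
    · rw [← hu]
      exact hxe
    · push_cast
      nlinarith
    · push_cast
      nlinarith
end
end
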